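/- Any permutation class with finitely many sum-indecomposable permutations and an unbounded growth function exhibits a Wilf collapse. -/

import Mathlib

open Filter Asymptotics

/-- A (finite) permutation: a size `n` together with a bijection of `Fin n`,
thought of in one-line notation as the sequence `π 0, π 1, …, π (n-1)`. -/
abbrev PPerm : Type := Σ n : ℕ, Equiv.Perm (Fin n)

/-- Pattern containment: `π ≤ τ` iff `τ` has a subsequence (a strictly increasing choice
of positions) whose entries are in the same relative order as `π`. -/
def PatternLE (π τ : PPerm) : Prop :=
  ∃ g : Fin π.1 → Fin τ.1, StrictMono g ∧
    ∀ i j : Fin π.1, π.2 i < π.2 j ↔ τ.2 (g i) < τ.2 (g j)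

/-- A permutation class: a set of permutations closed downward under containment. -/
def IsPermClass (C : Set PPerm) : Prop :=
  ∀ π τ : PPerm, PatternLE π τ → τ ∈ C → π ∈ C

/-- `cnt C n` is the number `c_n` of permutations of size `n` in `C`. -/
noncomputable def cnt (C : Set PPerm) (n : ℕ) : ℕ :=
  Set.ncard {τ : PPerm | τ ∈ C ∧ τ.1 = n}

/-- The number of permutations of size `n` in `C` avoiding `α`. -/
noncomputable def avcnt (C : Set PPerm) (α : PPerm) (n : ℕ) : ℕ :=
  Set.ncard {τ : PPerm | τ ∈ C ∧ τ.1 = n ∧ ¬ PatternLE α τ}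

/-- `α` and `β` are Wilf-equivalent in `C`: for every `n`, `C` has as many size-`n`
permutations avoiding `α` as avoiding `β`. -/
def WilfEq (C : Set PPerm) (α β : PPerm) : Prop := ∀ n : ℕ, avcnt C α n = avcnt C β n

/-- `wilfcnt C n` is the number `w_n` of Wilf(-equivalence) classes formed by the
size-`n` permutations of `C`. -/
noncomputable def wilfcnt (C : Set PPerm) (n : ℕ) : ℕ :=
  Set.ncard {S : Set PPerm | ∃ α : PPerm, α ∈ C ∧ α.1 = n ∧
    S = {β : PPerm | β ∈ C ∧ β.1 = n ∧ WilfEq C α β}}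

/-- `C` has a *Wilf collapse* if `w_n = o(c_n)`. -/
def WilfCollapse (C : Set PPerm) : Prop :=
  (fun n => (wilfcnt C n : ℝ)) =o[atTop] fun n => (cnt C n : ℝ)

/-- `C` has an *exponential Wilf collapse* if `w_n = o(rⁿ·c_n)` for some `r < 1`. -/
def ExpWilfCollapse (C : Set PPerm) : Prop :=
  ∃ r : ℝ, r < 1 ∧
    (fun n => (wilfcnt C n : ℝ)) =o[atTop] fun n => r ^ n * (cnt C n : ℝ)

/-- The (direct) sum `α ⊕ β` of two permutations: `β` is placed above and to the
right of `α`. -/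
def psum (α β : PPerm) : PPerm :=
  ⟨α.1 + β.1, (finSumFinEquiv.symm.trans ((Equiv.sumCongr α.2 β.2).trans finSumFinEquiv))⟩

/-- A permutation is *sum-indecomposable* if it is nonempty and is not the sum of two
nonempty permutations. -/
def SumIndec (π : PPerm) : Prop :=
  0 < π.1 ∧ ¬ ∃ α β : PPerm, 0 < α.1 ∧ 0 < β.1 ∧ π = psum α β

/-- A set of permutations is *sum-closed* if it is closed under `⊕`. -/
def SumClosed (C : Set PPerm) : Prop :=
  ∀ α β : PPerm, α ∈ C → β ∈ C → psum α β ∈ C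

namespace WC

/-- Words over a finite alphabet of weighted letters with a containment order. -/
structure WordOrder (σ : Type) where
  sz : σ → ℕ
  le : List σ → List σ → Prop
  one : σ
  sz_pos : ∀ a, 0 < sz a
  sz_one : sz one = 1
  refl : ∀ w, le w w
  trans : ∀ {u v w}, le u v → le v w → le u w
  nil_le : ∀ w, le [] w
  append : ∀ {u u' v v'}, le u u' → le v v' → le (u ++ v) (u' ++ v')
  split : ∀ {w u v}, le w (u ++ v) → ∃ w1 w2, w = w1 ++ w2 ∧ le w1 u ∧ le w2 v
  wt_le : ∀ {w v}, le w v → (w.map sz).sum ≤ (v.map sz).sum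
  eq_of_wt : ∀ {w v}, le w v → (w.map sz).sum = (v.map sz).sum → w = v
  one_le : ∀ a, le [one] [a]

namespace WordOrder
variable {σ : Type} (O : WordOrder σ)

/-- weight of a word -/
def wt (w : List σ) : ℕ := (w.map O.sz).sum

@[simp] lemma wt_nil : O.wt [] = 0 := by simp [wt]
@[simp] lemma wt_cons (a : σ) (w : List σ) : O.wt (a :: w) = O.sz a + O.wt w := by simp [wt]
@[simp] lemma wt_append (u v : List σ) : O.wt (u ++ v) = O.wt u + O.wt v := by simp [wt]
@[simp] lemma wt_reverse (u : List σ) : O.wt u.reverse = O.wt u := by simp [wt]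

lemma len_le_wt (w : List σ) : w.length ≤ O.wt w := by
  induction w with
  | nil => simp
  | cons a w ih => have := O.sz_pos a; simp; omega

lemma wt_eq_zero {w : List σ} (h : O.wt w = 0) : w = [] := by
  have := O.len_le_wt w
  exact List.length_eq_zero_iff.1 (by omega)

lemma le_nil {w : List σ} (h : O.le w []) : w = [] := by
  apply O.wt_eq_zero
  have := O.wt_le h
  simpa [wt] using this

lemma le_of_sublist {u v : List σ} (h : u.Sublist v) : O.le u v := by
  induction h with
  | slnil => exact O.refl _
  | cons a _ ih => exact O.append (O.nil_le [a]) ih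
  | cons_cons a _ ih => exact O.append (O.refl [a]) ih

/-- The reversed order. -/
def rev : WordOrder σ where
  sz := O.sz
  le u v := O.le u.reverse v.reverse
  one := O.one
  sz_pos := O.sz_pos
  sz_one := O.sz_one
  refl _ := O.refl _
  trans h1 h2 := O.trans h1 h2
  nil_le _ := O.nil_le _
  append h1 h2 := by simpa using O.append h2 h1
  split := by
    intro w u v h
    rw [List.reverse_append] at h
    obtain ⟨w1, w2, h0, h1, h2⟩ := O.split h
    refine ⟨w2.reverse, w1.reverse, ?_, by simpa using h2, by simpa using h1⟩
    rw [← List.reverse_append, ← h0, List.reverse_reverse]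
  wt_le h := by simpa using O.wt_le h
  eq_of_wt h h' := by
    have := O.eq_of_wt h (by simpa using h')
    simpa using this
  one_le a := by simpa using O.one_le a

/-- minimal words containing `p`, in the prefix sense -/
def Dl (p t : List σ) : Prop := O.le p t ∧ ∀ x y, t = x ++ y → y ≠ [] → ¬ O.le p x

/-- minimal words containing `p`, in the suffix sense -/
def Dr (p t : List σ) : Prop := O.rev.Dl p.reverse t.reverse

lemma Dr_le {p t : List σ} (h : O.Dr p t) : O.le p t := by
  have := h.1
  simpa [rev] using this

lemma Dl_code {p t t' x x' : List σ} (h : O.Dl p t) (h' : O.Dl p t')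
    (he : t ++ x = t' ++ x') : t = t' ∧ x = x' := by
  have : t = t' := by
    rcases List.append_eq_append_iff.1 he with ⟨y, h1, h2⟩ | ⟨y, h1, h2⟩
    · by_cases hy : y = []
      · simp [h1, hy]
      · exact absurd h.1 (h'.2 _ _ h1 hy)
    · by_cases hy : y = []
      · simp [h1, hy]
      · exact absurd h'.1 (h.2 _ _ h1 hy)
  subst this
  exact ⟨rfl, List.append_cancel_left he⟩

lemma Dr_code {p t t' x x' : List σ} (h : O.Dr p t) (h' : O.Dr p t')
    (he : x ++ t = x' ++ t') : t = t' ∧ x = x' := by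
  have := O.rev.Dl_code (x := x.reverse) (x' := x'.reverse) h h'
    (by rw [← List.reverse_append, ← List.reverse_append, he])
  simpa using this

lemma exists_Dl {p t : List σ} (h : O.le p t) : ∃ t1 t2, t = t1 ++ t2 ∧ O.Dl p t1 := by
  induction t using List.reverseRecOn with
  | nil =>
    refine ⟨[], [], rfl, h, ?_⟩
    intro x y hxy hy
    simp at hxy
    exact absurd hxy.2 hy
  | append_singleton t a ih =>
    by_cases h' : O.le p t
    · obtain ⟨t1, t2, rfl, h2⟩ := ih h'
      exact ⟨t1, t2 ++ [a], by simp, h2⟩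
    · refine ⟨t ++ [a], [], by simp, h, ?_⟩
      intro x y hxy hy hle
      apply h'
      rcases List.eq_nil_or_concat' y with rfl | ⟨y', b, rfl⟩
      · exact absurd rfl hy
      · rw [← List.append_assoc] at hxy
        have := (List.append_inj' hxy rfl).1
        rw [this]
        exact O.trans hle (O.le_of_sublist (List.sublist_append_left _ _))

lemma Dl_split {p s t T : List σ} (hD : O.Dl p t) (h : O.le (p ++ s) (t ++ T)) :
    ∃ s1 s2, s = s1 ++ s2 ∧ O.le (p ++ s1) t ∧ O.le s2 T ∧
      (s1 = [] ∨ ∃ p1 p2 t' a, p = p1 ++ p2 ∧ p2 ≠ [] ∧ t = t' ++ [a] ∧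
        O.le (p2 ++ s1) [a]) := by
  obtain ⟨w1, w2, h0, h1, h2⟩ := O.split h
  rcases List.append_eq_append_iff.1 h0 with ⟨y, hy1, hy2⟩ | ⟨y, hy1, hy2⟩
  · -- w1 = p ++ y
    subst hy1
    refine ⟨y, w2, hy2, h1, h2, ?_⟩
    rcases List.eq_nil_or_concat' t with rfl | ⟨t', a, rfl⟩
    · have := O.le_nil h1
      simp at this
      exact Or.inl this.2
    · obtain ⟨x1, x2, g0, g1, g2⟩ := O.split h1
      right
      rcases List.append_eq_append_iff.1 g0 with ⟨z, hz1, hz2⟩ | ⟨z, hz1, hz2⟩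
      · exfalso
        apply hD.2 t' [a] rfl (by simp)
        rw [hz1] at g1
        exact O.trans (O.le_of_sublist (List.sublist_append_left _ _)) g1
      · by_cases hz : z = []
        · exfalso
          subst hz
          apply hD.2 t' [a] rfl (by simp)
          rw [hz1]; simpa using g1
        · exact ⟨x1, z, t', a, hz1, hz, rfl, by rw [← hz2]; exact g2⟩
  · refine ⟨[], s, rfl, by simpa using hD.1, ?_, Or.inl rfl⟩
    rw [hy2] at h2
    exact O.trans (O.le_of_sublist (List.sublist_append_right _ _)) h2

lemma Dr_split {p s t T : List σ} (hD : O.Dr p t) (h : O.le (s ++ p) (T ++ t)) :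
    ∃ s1 s2, s = s2 ++ s1 ∧ O.le (s1 ++ p) t ∧ O.le s2 T ∧
      (s1 = [] ∨ ∃ p1 p2 t' a, p = p2 ++ p1 ∧ p2 ≠ [] ∧ t = a :: t' ∧
        O.le (s1 ++ p2) [a]) := by
  obtain ⟨s1, s2, h0, h1, h2, h3⟩ := O.rev.Dl_split (p := p.reverse) (s := s.reverse)
    (t := t.reverse) (T := T.reverse) hD (by simpa [rev] using h)
  refine ⟨s1.reverse, s2.reverse, ?_, by simpa [rev] using h1, by simpa [rev] using h2, ?_⟩
  · rw [← List.reverse_append, ← h0, List.reverse_reverse]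
  · rcases h3 with h3 | ⟨p1, p2, t', a, g1, g2, g3, g4⟩
    · left; simp [h3]
    · right
      refine ⟨p1.reverse, p2.reverse, t'.reverse, a, ?_, by simpa using g2, ?_, ?_⟩
      · rw [← List.reverse_append, ← g1, List.reverse_reverse]
      · have := congrArg List.reverse g3; simpa using this
      · simpa [rev] using g4

/-- letter-length bound -/
lemma len_le_of_le_singleton {w : List σ} {a : σ} {K : ℕ} (hK : ∀ a, O.sz a ≤ K)
    (h : O.le w [a]) : w.length ≤ K := by
  have h1 := O.len_le_wt w
  have h2 := O.wt_le h
  have h3 := hK a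
  simp [wt] at h1 h2
  omega

lemma Dl_split' {K : ℕ} (hK : ∀ a, O.sz a ≤ K) {p s t T : List σ} (hD : O.Dl p t)
    (h : O.le (p ++ s) (t ++ T)) :
    ∃ s1 s2, s = s1 ++ s2 ∧ O.le (p ++ s1) t ∧ O.le s2 T ∧ s1.length ≤ K := by
  obtain ⟨s1, s2, h0, h1, h2, h3⟩ := O.Dl_split hD h
  refine ⟨s1, s2, h0, h1, h2, ?_⟩
  rcases h3 with rfl | ⟨p1, p2, t', a, -, -, -, g4⟩
  · simp
  · have := O.len_le_of_le_singleton hK g4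
    simp at this; omega

lemma Dr_split' {K : ℕ} (hK : ∀ a, O.sz a ≤ K) {p s t T : List σ} (hD : O.Dr p t)
    (h : O.le (s ++ p) (T ++ t)) :
    ∃ s1 s2, s = s2 ++ s1 ∧ O.le (s1 ++ p) t ∧ O.le s2 T ∧ s1.length ≤ K := by
  obtain ⟨s1, s2, h0, h1, h2, h3⟩ := O.Dr_split hD h
  refine ⟨s1, s2, h0, h1, h2, ?_⟩
  rcases h3 with rfl | ⟨p1, p2, t', a, -, -, -, g4⟩
  · simp
  · have := O.len_le_of_le_singleton hK g4
    simp at this; omega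

lemma exists_Dr {p t : List σ} (h : O.le p t) : ∃ t1 t2, t = t2 ++ t1 ∧ O.Dr p t1 := by
  obtain ⟨t1, t2, h0, h1⟩ := O.rev.exists_Dl (p := p.reverse) (t := t.reverse)
    (by simpa [rev] using h)
  refine ⟨t1.reverse, t2.reverse, ?_, by simpa [Dr] using h1⟩
  rw [← List.reverse_append, ← h0, List.reverse_reverse]

/-- splitting a containment in the left factor -/
lemma split_left {K : ℕ} (hK : ∀ a, O.sz a ≤ K) {p s t : List σ} (h : O.le (p ++ s) t) :
    ∃ t1 t2 s1 s2, t = t1 ++ t2 ∧ s = s1 ++ s2 ∧ s1.length ≤ K ∧ O.Dl p t1 ∧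
      O.le (p ++ s1) t1 ∧ O.le s2 t2 := by
  obtain ⟨t1, t2, rfl, hD⟩ := O.exists_Dl
    (O.trans (O.le_of_sublist (List.sublist_append_left p s)) h)
  obtain ⟨s1, s2, h0, h1, h2, h3⟩ := O.Dl_split' hK hD h
  exact ⟨t1, t2, s1, s2, rfl, h0, h3, hD, h1, h2⟩

lemma split_right {K : ℕ} (hK : ∀ a, O.sz a ≤ K) {p s t : List σ} (h : O.le (s ++ p) t) :
    ∃ t1 t2 s1 s2, t = t2 ++ t1 ∧ s = s2 ++ s1 ∧ s1.length ≤ K ∧ O.Dr p t1 ∧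
      O.le (s1 ++ p) t1 ∧ O.le s2 t2 := by
  obtain ⟨t1, t2, rfl, hD⟩ := O.exists_Dr
    (O.trans (O.le_of_sublist (List.sublist_append_right s p)) h)
  obtain ⟨s1, s2, h0, h1, h2, h3⟩ := O.Dr_split' hK hD h
  exact ⟨t1, t2, s1, s2, rfl, h0, h3, hD, h1, h2⟩

/-- words over `A` closed under containment -/
lemma mem_of_le {A : Set σ} (hA : ∀ a ∈ A, ∀ b, O.le [b] [a] → b ∈ A) {w v : List σ}
    (h : O.le w v) (hv : ∀ x ∈ v, x ∈ A) : ∀ x ∈ w, x ∈ A := by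
  induction v generalizing w with
  | nil => rw [O.le_nil h]; simp
  | cons a v ih =>
    obtain ⟨w1, w2, rfl, h1, h2⟩ := O.split (u := [a]) (v := v) h
    intro x hx
    rcases List.mem_append.1 hx with hx | hx
    · apply hA a (hv a (by simp)) x
      exact O.trans (O.le_of_sublist (List.singleton_sublist.2 hx)) h1
    · exact ih h2 (fun y hy => hv y (by simp [hy])) x hx

/-- repetition -/
def pw (z : List σ) (n : ℕ) : List σ := (List.replicate n z).flatten

@[simp] lemma pw_zero (z : List σ) : pw z 0 = [] := by simp [pw]
lemma pw_succ (z : List σ) (n : ℕ) : pw z (n+1) = z ++ pw z n := by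
  simp [pw, List.replicate_succ]
lemma pw_add (z : List σ) (m n : ℕ) : pw z (m+n) = pw z m ++ pw z n := by
  induction m with
  | zero => simp
  | succ m ih => rw [Nat.succ_add, Nat.succ_eq_add_one, pw_succ, ih, pw_succ]; simp
lemma mem_pw {z : List σ} {n : ℕ} {x : σ} (h : x ∈ pw z n) : x ∈ z := by
  simp [pw] at h; exact h.2
lemma len_pw {z : List σ} (hz : z ≠ []) (n : ℕ) : n ≤ (pw z n).length := by
  induction n with
  | zero => simp
  | succ n ih =>
    have := List.length_pos_iff.2 hz
    rw [pw_succ]; simp; omega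
lemma pw_sublist {z : List σ} {m n : ℕ} (h : m ≤ n) : (pw z m).Sublist (pw z n) := by
  obtain ⟨k, rfl⟩ := Nat.exists_eq_add_of_le h
  rw [pw_add]; exact List.sublist_append_left _ _

end WordOrder

lemma suffix_of_len {σ : Type} {x y s1 s2 : List σ} (h : x ++ y = s1 ++ s2)
    (hl : s1.length ≤ x.length) : y.Sublist s2 := by
  rcases List.append_eq_append_iff.1 h with ⟨z, h1, h2⟩ | ⟨z, h1, h2⟩
  · have : z = [] := by
      apply List.length_eq_zero_iff.1
      have := congrArg List.length h1
      simp at this; omega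
    subst this; simp at h2; rw [h2]
  · rw [h2]; exact List.sublist_append_right _ _

lemma prefix_of_len {σ : Type} {x y s1 s2 : List σ} (h : x ++ y = s1 ++ s2)
    (hl : s2.length ≤ y.length) : x.Sublist s1 := by
  have := suffix_of_len (x := y.reverse) (y := x.reverse) (s1 := s2.reverse) (s2 := s1.reverse)
    (by rw [← List.reverse_append, h, List.reverse_append]) (by simpa using hl)
  simpa using this

end WC

namespace WC
namespace WordOrder
open Classical
set_option linter.unusedSectionVars false
variable {σ : Type} [Fintype σ] (O : WordOrder σ)

def DC (K : Set (List σ)) : Prop := ∀ u v, O.le u v → v ∈ K → u ∈ K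

def res (K : Set (List σ)) (t : List σ) : Set (List σ) := {v | t ++ v ∈ K}

noncomputable def loop (K : Set (List σ)) : Finset σ :=
  Finset.univ.filter (fun a => ∀ v ∈ K, a :: v ∈ K)

/-- all letters in `A` -/
def Over (A : Finset σ) (w : List σ) : Prop := ∀ x ∈ w, x ∈ A

lemma over_append {A : Finset σ} {u v : List σ} : Over A (u ++ v) ↔ Over A u ∧ Over A v := by
  simp only [Over, List.mem_append]
  constructor
  · intro h; exact ⟨fun x hx => h x (Or.inl hx), fun x hx => h x (Or.inr hx)⟩
  · rintro ⟨h1, h2⟩ x (hx | hx); exacts [h1 x hx, h2 x hx]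

lemma first_split (A : Finset σ) (w : List σ) :
    Over A w ∨ ∃ w0 c w1, w = w0 ++ c :: w1 ∧ Over A w0 ∧ c ∉ A := by
  induction w with
  | nil => left; simp [Over]
  | cons a w ih =>
    by_cases ha : a ∈ A
    · rcases ih with ih | ⟨w0, c, w1, rfl, h1, h2⟩
      · left; intro x hx; rcases List.mem_cons.1 hx with rfl | hx
        exacts [ha, ih x hx]
      · right; refine ⟨a :: w0, c, w1, rfl, ?_, h2⟩
        intro x hx; rcases List.mem_cons.1 hx with rfl | hx
        exacts [ha, h1 x hx]
    · right; exact ⟨[], a, w, rfl, by simp [Over], ha⟩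

variable {O}

lemma dc_res {K : Set (List σ)} (h : O.DC K) (t : List σ) : O.DC (res K t) :=
  fun _ _ huv hv => h _ _ (O.append (O.refl t) huv) hv

lemma res_subset {K : Set (List σ)} (h : O.DC K) (t : List σ) : res K t ⊆ K :=
  fun _ hv => h _ _ (O.le_of_sublist (List.sublist_append_right _ _)) hv

lemma res_ssubset {K : Set (List σ)} (h : O.DC K) {c : σ} (hc : c ∉ loop K) :
    res K [c] ⊂ K := by
  refine ⟨res_subset h _, fun hsub => hc ?_⟩
  simp only [loop, Finset.mem_filter, Finset.mem_univ, true_and]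
  intro v hv
  exact hsub hv

lemma res_append (K : Set (List σ)) (s t : List σ) : res K (s ++ t) = res (res K s) t := by
  ext v; simp [res]

lemma res_nil (K : Set (List σ)) : res K [] = K := by ext v; simp [res]

lemma mem_of_loop {K : Set (List σ)} {w v : List σ} (hw : Over (loop K) w)
    (hv : v ∈ K) : w ++ v ∈ K := by
  induction w with
  | nil => simpa using hv
  | cons a w ih =>
    have ha : a ∈ loop K := hw a (by simp)
    simp only [loop, Finset.mem_filter, Finset.mem_univ, true_and] at ha
    exact ha _ (ih (fun x hx => hw x (by simp [hx])))

lemma res_loop {K : Set (List σ)} (h : O.DC K) {w : List σ} (hw : Over (loop K) w) :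
    res K w = K :=
  Set.Subset.antisymm (res_subset h w) (fun _ hv => mem_of_loop hw hv)

lemma loop_down {K : Set (List σ)} (h : O.DC K) {a b : σ} (ha : a ∈ loop K)
    (hb : O.le [b] [a]) : b ∈ loop K := by
  simp only [loop, Finset.mem_filter, Finset.mem_univ, true_and] at ha ⊢
  intro v hv
  exact h _ _ (O.append hb (O.refl v)) (ha v hv)

lemma over_loop_of_le {K : Set (List σ)} (h : O.DC K) {w v : List σ} (hw : Over (loop K) w)
    (hv : O.le v w) : Over (loop K) v := by
  intro x hx
  have := O.mem_of_le (A := (loop K : Set σ)) (fun a ha b hb => loop_down h ha hb) hv hw x hx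
  exact this

lemma wf_dc : WellFounded (fun K K' : {K : Set (List σ) // O.DC K} => K.1 ⊂ K'.1) := by
  rw [RelEmbedding.wellFounded_iff_isEmpty]
  refine ⟨fun f => ?_⟩
  have hf : ∀ i, ∃ w, w ∈ (f i).1 ∧ w ∉ (f (i+1)).1 := by
    intro i
    have : (f (i+1)).1 ⊂ (f i).1 := f.map_rel_iff.2 (Nat.lt_succ_self i)
    exact Set.exists_of_ssubset this
  choose w hw1 hw2 using hf
  have hanti : ∀ i j, i ≤ j → (f j).1 ⊆ (f i).1 := by
    intro i j hij
    rcases hij.eq_or_lt with rfl | hlt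
    · exact subset_rfl
    · exact (f.map_rel_iff.2 hlt : (f j).1 ⊂ (f i).1).1
  have hpwo : (Set.univ : Set σ).PartiallyWellOrderedOn (· = ·) :=
    (Set.finite_univ).partiallyWellOrderedOn
  have hH := Set.PartiallyWellOrderedOn.partiallyWellOrderedOn_sublistForall₂ (· = ·) hpwo
  obtain ⟨i, j, hij, hs⟩ := hH.exists_lt (f := w) (fun n x _ => Set.mem_univ x)
  have hsub : (w i).Sublist (w j) := by
    obtain ⟨l, hl1, hl2⟩ := List.sublistForall₂_iff.1 hs
    rw [List.forall₂_eq_eq_eq] at hl1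
    rw [hl1]; exact hl2
  exact hw2 i (hanti (i+1) j hij ((f j).2 _ _ (O.le_of_sublist hsub) (hw1 j)))

lemma dc_induction {P : Set (List σ) → Prop}
    (h : ∀ K, O.DC K → (∀ c ∉ loop K, P (res K [c])) → P K) : ∀ K, O.DC K → P K := by
  have : ∀ K : {K : Set (List σ) // O.DC K}, P K.1 := by
    intro K
    induction K using (wf_dc (O := O)).induction with
    | _ K ih =>
      exact h K.1 K.2 (fun c hc => ih ⟨res K.1 [c], dc_res K.2 _⟩ (res_ssubset K.2 hc))
  exact fun K hK => this ⟨K, hK⟩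

lemma pump_one {M : ℕ} (hM : ∀ a, O.sz a ≤ M) (A : Finset σ) (K : Set (List σ)) (hK : O.DC K) :
    ∃ N, ∀ t W, Over A W → O.le (pw A.toList N) W → A ⊆ loop (res K (t ++ W)) := by
  by_cases hA0 : A = ∅
  · exact ⟨0, by simp [hA0]⟩
  have hz : A.toList ≠ [] := by simpa using hA0
  refine dc_induction (O := O) (P := fun K => ∃ N, ∀ t W, Over A W →
    O.le (pw A.toList N) W → A ⊆ loop (res K (t ++ W))) ?_ K hK
  intro K hK ih
  have ih' : ∀ c, ∃ N, c ∉ loop K → ∀ t W, Over A W →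
    O.le (pw A.toList N) W → A ⊆ loop (res (res K [c]) (t ++ W)) := by
    intro c
    by_cases hc : c ∈ loop K
    · exact ⟨0, fun h => absurd hc h⟩
    · obtain ⟨N, hN⟩ := ih c hc
      exact ⟨N, fun _ => hN⟩
  choose Nc hNc using ih'
  have hle : ∀ c, Nc c ≤ ∑ c, Nc c := fun c =>
    Finset.single_le_sum (f := Nc) (fun _ _ => Nat.zero_le _) (Finset.mem_univ c)
  refine ⟨1 + M + ∑ c, Nc c, ?_⟩
  intro t W hWA hW
  rcases first_split (loop K) t with ht | ⟨t0, c, t1, rfl, ht0, hc⟩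
  · rw [res_append, res_loop hK ht]
    have key : ∀ w, Over (loop K) w → O.le A.toList w → A ⊆ loop K := by
      intro w hw hzw x hx
      exact over_loop_of_le hK hw hzw x (by simpa using hx)
    rcases first_split (loop K) W with hl | ⟨w0, c, w1, rfl, hw0, hc⟩
    · rw [res_loop hK hl]
      apply key W hl
      refine O.trans (O.le_of_sublist ?_) hW
      rw [show 1 + M + ∑ c, Nc c = (M + ∑ c, Nc c) + 1 by omega, pw_succ]
      exact List.sublist_append_left _ _
    · rw [res_append, res_loop hK hw0]
      have := res_append K [c] w1
      rw [show c :: w1 = [c] ++ w1 from rfl, this]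
      have hcA : c ∈ A := hWA c (by simp)
      obtain ⟨y0, y', h0, h1, h2⟩ := O.split hW
      obtain ⟨y1, y2, rfl, h3, h4⟩ := O.split (u := [c]) (v := w1) h2
      have hy0 : y0.length ≤ A.toList.length := by
        by_contra hcon
        push Not at hcon
        apply hc
        refine key w0 hw0 (O.trans (O.le_of_sublist ?_) h1) hcA
        rw [show 1 + M + ∑ c, Nc c = (M + ∑ c, Nc c) + 1 by omega, pw_succ] at h0
        rcases List.append_eq_append_iff.1 h0 with ⟨z, g1, g2⟩ | ⟨z, g1, g2⟩
        · rw [g1]; exact List.sublist_append_left _ _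
        · have := congrArg List.length g1
          simp only [List.length_append] at this
          omega
      have hy1 := O.len_le_of_le_singleton hM h3
      have hsub : (pw A.toList (∑ c, Nc c)).Sublist y2 := by
        apply suffix_of_len (x := pw A.toList (1 + M)) (s1 := y0 ++ y1)
        · rw [← pw_add, h0]; simp
        · rw [add_comm 1 M, pw_succ]
          have := len_pw hz M
          simp only [List.length_append] at *
          omega
      have hw1 : Over A w1 := fun x hx => hWA x (by simp [hx])
      have := hNc c hc [] w1 hw1 (O.trans (O.le_of_sublist
        ((pw_sublist (hle c)).trans hsub)) h4)
      simpa using this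
  · have h1 : res K (t0 ++ c :: t1 ++ W) = res (res K [c]) (t1 ++ W) := by
      rw [List.append_assoc, res_append, res_loop hK ht0]
      exact res_append K [c] (t1 ++ W)
    rw [h1]
    refine hNc c hc t1 W hWA (O.trans (O.le_of_sublist (pw_sublist ?_)) hW)
    have := hle c
    omega

lemma pump {M : ℕ} (hM : ∀ a, O.sz a ≤ M) (K : Set (List σ)) (hK : O.DC K) :
    ∃ N, 0 < N ∧ ∀ (A : Finset σ) t W, Over A W → O.le (pw A.toList N) W →
      A ⊆ loop (res K (t ++ W)) := by
  choose N hN using fun A : Finset σ => pump_one hM A K hK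
  refine ⟨1 + ∑ A, N A, by omega, fun A t W hW h => hN A t W hW ?_⟩
  refine O.trans (O.le_of_sublist (pw_sublist ?_)) h
  have := Finset.single_le_sum (f := N) (fun _ _ => Nat.zero_le _) (Finset.mem_univ A)
  omega

/-- chains of generic blocks -/
def Good (Big : Finset σ → Prop) (U : Finset σ → List σ) : ℕ → List σ → Prop
  | 0, _ => True
  | 1, w => ∃ A u v, Big A ∧ w = u ++ U A ++ v
  | j+2, w => ∃ A u u' c v, Big A ∧ c ∉ A ∧ w = u ++ U A ++ u' ++ c :: v ∧ Good Big U (j+1) v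

lemma good_left {Big : Finset σ → Prop} {U : Finset σ → List σ} {j : ℕ} {w : List σ}
    (x : List σ) (h : Good Big U j w) : Good Big U j (x ++ w) := by
  match j with
  | 0 => trivial
  | 1 =>
    obtain ⟨A, u, v, h1, rfl⟩ := h
    exact ⟨A, x ++ u, v, h1, by simp⟩
  | j+2 =>
    obtain ⟨A, u, u', c, v, h1, h2, rfl, h3⟩ := h
    exact ⟨A, x ++ u, u', c, v, h1, h2, by simp, h3⟩

lemma good_pred {Big : Finset σ → Prop} {U : Finset σ → List σ} {j : ℕ} {w : List σ}
    (h : Good Big U (j+1) w) : Good Big U j w := by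
  match j with
  | 0 => trivial
  | j+1 =>
    obtain ⟨A, u, u', c, v, h1, h2, rfl, h3⟩ := h
    rw [show u ++ U A ++ u' ++ c :: v = (u ++ U A ++ u' ++ [c]) ++ v by simp]
    exact good_left _ h3

lemma good_mono {Big : Finset σ → Prop} {U : Finset σ → List σ} {i j : ℕ} {w : List σ}
    (hij : i ≤ j) (h : Good Big U j w) : Good Big U i w := by
  induction hij with
  | refl => exact h
  | step _ ih => exact ih (good_pred h)

/-- if `U A` always contains `Z A` as a factor -/
lemma good_factor {Big : Finset σ → Prop} {U Z : Finset σ → List σ}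
    (hUZ : ∀ A, Big A → ∃ x y, U A = x ++ Z A ++ y) {j : ℕ} {w : List σ}
    (h : Good Big U j w) : Good Big Z j w := by
  match j with
  | 0 => trivial
  | 1 =>
    obtain ⟨A, u, v, h1, rfl⟩ := h
    obtain ⟨x, y, hxy⟩ := hUZ A h1
    exact ⟨A, u ++ x, y ++ v, h1, by simp [hxy]⟩
  | j+2 =>
    obtain ⟨A, u, u', c, v, h1, h2, rfl, h3⟩ := h
    obtain ⟨x, y, hxy⟩ := hUZ A h1
    exact ⟨A, u ++ x, y ++ u', c, v, h1, h2, by simp [hxy], good_factor hUZ h3⟩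

lemma good_step {Big : Finset σ → Prop} {Z : Finset σ → List σ} {j : ℕ} {w : List σ}
    {A : Finset σ} (hA : Big A) {c : σ} (hc : c ∉ A) {u' : List σ} (hcu : c ∈ u') {u : List σ}
    (h : Good Big Z (j+1) w) : Good Big Z (j+2) (u ++ Z A ++ u' ++ w) := by
  obtain ⟨s, t, rfl⟩ := List.append_of_mem hcu
  exact ⟨A, u, s, c, t ++ w, hA, hc, by simp, good_left t h⟩

/-- Chains are bounded. -/
lemma good_bounded {L : Set (List σ)} {Big : Finset σ → Prop} {Z : Finset σ → List σ}
    (hZ : ∀ A, Big A → ∀ x ∈ A, x ∈ Z A)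
    (hmax : ∀ A B, Big A → A ⊆ B → (∀ w, Over B w → w ∈ L) → B ⊆ A)
    (K : Set (List σ)) (hK : O.DC K) (hKL : K ⊆ L) : ∃ J, ∀ w ∈ K, ¬ Good Big Z J w := by
  refine dc_induction (O := O) (P := fun K => K ⊆ L → ∃ J, ∀ w ∈ K, ¬ Good Big Z J w)
    ?_ K hK hKL
  intro K hK ih hKL
  have ih' : ∀ c, ∃ J, c ∉ loop K → ∀ w ∈ res K [c], ¬ Good Big Z J w := by
    intro c
    by_cases hc : c ∈ loop K
    · exact ⟨0, fun h => absurd hc h⟩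
    · obtain ⟨N, hN⟩ := ih c hc ((res_subset hK _).trans hKL)
      exact ⟨N, fun _ => hN⟩
  choose Jc hJc using ih'
  refine ⟨(∑ c, Jc c) + 2, ?_⟩
  intro w hw hg
  obtain ⟨A, u, u', c, v, h1, h2, rfl, h3⟩ := hg
  rcases first_split (loop K) (u ++ Z A ++ u' ++ [c]) with hl | ⟨w0, d, w1, he, -, hd⟩
  · have hsub : A ⊆ loop K := fun x hx => hl x (by simp [hZ A h1 x hx])
    have := hmax A (loop K) h1 hsub (fun w' hw' => hKL (by
      have : w' ++ [] ∈ K := mem_of_loop hw' (hK _ _ (O.nil_le _) hw)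
      simpa using this))
    exact h2 (this (hl c (by simp)))
  · rw [show u ++ Z A ++ u' ++ c :: v = (u ++ Z A ++ u' ++ [c]) ++ v by simp, he] at hw
    have hw' : w1 ++ v ∈ res K [d] := by
      apply hK _ _ _ hw
      apply O.le_of_sublist
      simp
    apply hJc d hd _ hw'
    refine good_left _ (good_mono ?_ h3)
    have := Finset.single_le_sum (f := Jc) (fun _ _ => Nat.zero_le _) (Finset.mem_univ d)
    omega

end WordOrder
end WC

namespace WC
namespace WordOrder
open Classical
set_option linter.unusedSectionVars false
variable {σ : Type} [Fintype σ] {O : WordOrder σ}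

def Tight (L : Set (List σ)) (N : ℕ) (u : List σ) (A : Finset σ) (v : List σ) : Prop :=
  ∀ c ∉ A, u ++ pw A.toList N ++ [c] ++ (pw A.toList N ++ v) ∉ L

lemma ch {L : Set (List σ)} (hL : O.DC L) {N : ℕ} {u v : List σ} {A : Finset σ}
    (hT : Tight L N u A v) {t1 t2 t3 : List σ} (h1 : O.le (u ++ pw A.toList N) t1)
    (h3 : O.le (pw A.toList N ++ v) t3) (h : t1 ++ t2 ++ t3 ∈ L) : Over A t2 := by
  intro c hc
  by_contra hcA
  apply hT c hcA
  refine hL _ _ ?_ h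
  exact O.append (O.append h1 (O.le_of_sublist (List.singleton_sublist.2 hc))) h3

lemma lp_left {L : Set (List σ)} (hL : O.DC L) {M N : ℕ} (hM : ∀ a, O.sz a ≤ M) (hN : 0 < N)
    {u v : List σ} {A : Finset σ} (hA : A.Nonempty)
    (hT : Tight L N u A v) {t1 t3 : List σ} (h1 : O.le (u ++ pw A.toList (2*N+M)) t1)
    (h3 : O.le (pw A.toList N ++ v) t3) (h : t1 ++ t3 ∈ L) :
    ∃ x y, t1 = x ++ y ∧ Over A y ∧ O.le (pw A.toList N) y ∧ y ≠ [] := by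
  have hz : A.toList ≠ [] := by simpa using hA.ne_empty
  rw [show 2*N+M = N + (M+N) by ring, pw_add, ← List.append_assoc] at h1
  obtain ⟨x, y, s1, s2, rfl, hs, hl, -, g1, g2⟩ := O.split_left hM h1
  have hsub : (pw A.toList N).Sublist s2 := by
    apply suffix_of_len (x := pw A.toList M) (s1 := s1)
    · rw [← pw_add, hs]
    · exact hl.trans (len_pw hz M)
  have hy : O.le (pw A.toList N) y := O.trans (O.le_of_sublist hsub) g2
  refine ⟨x, y, rfl, ?_, hy, ?_⟩
  · exact ch hL hT (O.trans (O.le_of_sublist (List.sublist_append_left _ _)) g1) h3 h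
  · rintro rfl
    have := O.le_nil hy
    have h2 := len_pw hz N
    rw [this] at h2; simp at h2; omega

lemma lp_right {L : Set (List σ)} (hL : O.DC L) {M N : ℕ} (hM : ∀ a, O.sz a ≤ M) (hN : 0 < N)
    {u v : List σ} {A : Finset σ} (hA : A.Nonempty)
    (hT : Tight L N u A v) {t1 t3 : List σ} (h1 : O.le (u ++ pw A.toList N) t1)
    (h3 : O.le (pw A.toList (2*N+M) ++ v) t3) (h : t1 ++ t3 ∈ L) :
    ∃ x y, t3 = x ++ y ∧ Over A x ∧ x ≠ [] := by
  have hz : A.toList ≠ [] := by simpa using hA.ne_empty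
  rw [show 2*N+M = (N+M) + N by ring, pw_add, List.append_assoc] at h3
  obtain ⟨y, x, s1, s2, rfl, hs, hl, -, g1, g2⟩ := O.split_right hM h3
  have hsub : (pw A.toList N).Sublist s2 := by
    apply prefix_of_len (y := pw A.toList M) (s2 := s1)
    · rw [← pw_add, hs]
    · exact hl.trans (len_pw hz M)
  have hx : O.le (pw A.toList N) x := O.trans (O.le_of_sublist hsub) g2
  refine ⟨x, y, rfl, ?_, ?_⟩
  · refine ch hL hT h1 (O.trans (O.le_of_sublist (List.sublist_append_right _ _)) g1)
      (by simpa using h)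
  · rintro rfl
    have := O.le_nil hx
    have h2 := len_pw hz N
    rw [this] at h2; simp at h2; omega

/-- the pumping property of the constant `N` -/
def Pump (O : WordOrder σ) (L : Set (List σ)) (N : ℕ) : Prop :=
  ∀ (A : Finset σ) t W, Over A W → O.le (pw A.toList N) W → A ⊆ loop (res L (t ++ W))

lemma lp_insert {L : Set (List σ)} (hL : O.DC L) {M N : ℕ} (hM : ∀ a, O.sz a ≤ M) (hN : 0 < N)
    (hP : Pump O L N)
    {u v : List σ} {A : Finset σ} (hA : A.Nonempty)
    (hT : Tight L N u A v) {t1 t3 : List σ} (h1 : O.le (u ++ pw A.toList (2*N+M)) t1)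
    (h3 : O.le (pw A.toList N ++ v) t3) (h : t1 ++ t3 ∈ L) {y : List σ} (hy : Over A y) :
    t1 ++ y ++ t3 ∈ L := by
  obtain ⟨x, y', rfl, hy1, hy2, -⟩ := lp_left hL hM hN hA hT h1 h3 h
  have := hP A x y' hy1 hy2
  have := mem_of_loop (K := res L (x ++ y')) (w := y) (fun a ha => this (hy a ha)) (v := t3) h
  simpa [res] using this

/-- words of `L` of weight `n` containing `α` -/
def Tset (O : WordOrder σ) (L : Set (List σ)) (α : List σ) (n : ℕ) : Set (List σ) :=
  {t | t ∈ L ∧ O.wt t = n ∧ O.le α t}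

lemma finite_wt (O : WordOrder σ) (n : ℕ) : {t : List σ | O.wt t ≤ n}.Finite :=
  (List.finite_length_le σ n).subset (fun t ht => (O.len_le_wt t).trans ht)

lemma finite_Tset (L : Set (List σ)) (α : List σ) (n : ℕ) : (Tset O L α n).Finite :=
  (finite_wt O n).subset (fun _ ht => ht.2.1.le)

lemma inj_count {L : Set (List σ)} {α β p r : List σ} {φ : List σ → List σ}
    (hφ : Function.Injective φ) (hwt : ∀ w, O.wt (φ w) = O.wt w)
    (h : ∀ t ∈ L, O.le α t → ∃ t1 t2 t3, t = t1 ++ t2 ++ t3 ∧ O.Dl p t1 ∧ O.Dr r t3 ∧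
      t1 ++ φ t2 ++ t3 ∈ L ∧ O.le β (t1 ++ φ t2 ++ t3)) (n : ℕ) :
    (Tset O L α n).ncard ≤ (Tset O L β n).ncard := by
  choose! f1 f2 f3 h0 h1 h3 h4 h5 using h
  apply Set.ncard_le_ncard_of_injOn (fun t => f1 t ++ φ (f2 t) ++ f3 t) _ _ (finite_Tset _ _ _)
  · rintro t ⟨ht1, ht2, ht3⟩
    refine ⟨h4 t ht1 ht3, ?_, h5 t ht1 ht3⟩
    have := congrArg O.wt (h0 t ht1 ht3)
    simp only [wt_append, hwt] at this ⊢
    omega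
  · rintro t ⟨ht1, ht2, ht3⟩ s ⟨hs1, hs2, hs3⟩ he
    simp only [List.append_assoc] at he
    obtain ⟨e1, e2⟩ := O.Dl_code (h1 t ht1 ht3) (h1 s hs1 hs3) he
    obtain ⟨e3, e4⟩ := O.Dr_code (h3 t ht1 ht3) (h3 s hs1 hs3) e2
    rw [h0 t ht1 ht3, h0 s hs1 hs3, e1, hφ e4, e3]

/-! ### Exponential case -/

lemma expo_host {L : Set (List σ)} (hL : O.DC L) {M N : ℕ} (hM : ∀ a, O.sz a ≤ M) (hN : 0 < N)
    {u v : List σ} {A : Finset σ} (hT : Tight L N u A v)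
    {b : σ} (hb : b ∈ A) (hbmax : ∀ a ∈ A, O.sz a ≤ O.sz b) {m t : List σ}
    (h : O.le ((u ++ pw A.toList (2*N+2*M) ++ [b]) ++ m ++ ([b] ++ pw A.toList (2*N+2*M) ++ v)) t)
    (ht : t ∈ L) :
    ∃ t1 t2 t3, t = t1 ++ t2 ++ t3 ∧ O.Dl (u ++ pw A.toList (2*N+2*M) ++ [b]) t1 ∧
      O.Dr ([b] ++ pw A.toList (2*N+2*M) ++ v) t3 ∧ Over A t2 ∧ O.le m t2 ∧
      O.le (u ++ pw A.toList (2*N+M)) t1 ∧ O.le (pw A.toList N ++ v) t3 := by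
  have hA : A.Nonempty := ⟨b, hb⟩
  have hz : A.toList ≠ [] := by simpa using hA.ne_empty
  have psub : ∀ {i j : ℕ}, i ≤ j → O.le (pw A.toList i) (pw A.toList j) :=
    fun hij => O.le_of_sublist (pw_sublist hij)
  set p := u ++ pw A.toList (2*N+2*M) ++ [b] with hp
  set r := [b] ++ pw A.toList (2*N+2*M) ++ v with hr
  have hpu : O.le (u ++ pw A.toList (2*N+M)) p := by
    rw [hp]
    exact O.trans (O.append (O.refl u) (psub (by omega)))
      (O.le_of_sublist (List.sublist_append_left _ _))
  have hpu' : O.le (u ++ pw A.toList N) p :=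
    O.trans (O.append (O.refl u) (psub (by omega))) hpu
  rw [List.append_assoc] at h
  obtain ⟨t1, T, rfl, hD⟩ := O.exists_Dl
    (O.trans (O.le_of_sublist (List.sublist_append_left p (m ++ r))) h)
  have ht1 := O.trans hpu hD.1
  have ht1' := O.trans hpu' hD.1
  have hTv : O.le (pw A.toList (2*N+M) ++ v) T := by
    obtain ⟨s1, s2, e0, e1, e2, e3⟩ := O.Dl_split' hM hD h
    refine O.trans (O.le_of_sublist ?_) e2
    apply suffix_of_len (x := m ++ [b] ++ pw A.toList M) (s1 := s1)
    · rw [← e0, hr, show 2*N+2*M = M + (2*N+M) by ring, pw_add _ M (2*N+M)]; simp only [List.append_assoc]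
    · have := len_pw hz M
      simp; omega
  have hTv' : O.le (pw A.toList N ++ v) T :=
    O.trans (O.append (psub (by omega)) (O.refl v)) hTv
  -- first cut
  have hmr : O.le (m ++ r) T := by
    obtain ⟨s1, s2, e0, e1, e2, e3⟩ := O.Dl_split hD h
    have hs1 : s1 = [] := by
      rcases e3 with e3 | ⟨p1, p2, t', a, g1, g2, g3, g4⟩
      · exact e3
      · have haA : a ∈ A := by
          obtain ⟨x, y, hxy, hy, -, hy0⟩ := lp_left hL hM hN hA hT ht1 hTv' ht
          rcases List.eq_nil_or_concat' y with rfl | ⟨y', a', rfl⟩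
          · exact absurd rfl hy0
          · rw [g3, ← List.append_assoc] at hxy
            have := (List.append_inj' hxy rfl).2
            simp at this
            rw [this]; exact hy a' (by simp)
        rcases List.eq_nil_or_concat' p2 with rfl | ⟨p2', b', rfl⟩
        · exact absurd rfl g2
        · rw [hp, ← List.append_assoc] at g1
          have := (List.append_inj' g1 rfl).2
          simp at this
          subst this
          have hw := O.wt_le g4
          have := hbmax a haA
          change O.wt _ ≤ O.wt _ at hw
          simp at hw
          exact O.wt_eq_zero (by omega)
    subst hs1
    simp at e0
    rw [e0]; exact e2
  obtain ⟨t3, t2, rfl, hD3⟩ := O.exists_Dr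
    (O.trans (O.le_of_sublist (List.sublist_append_right m r)) hmr)
  have ht3 : O.le (pw A.toList (2*N+M) ++ v) t3 := by
    refine O.trans ?_ (O.Dr_le hD3)
    rw [hr]
    refine O.append (O.trans (psub (by omega))
      (O.le_of_sublist (List.sublist_append_right [b] _))) (O.refl v)
  have ht3' : O.le (pw A.toList N ++ v) t3 :=
    O.trans (O.append (psub (by omega)) (O.refl v)) ht3
  have hm : O.le m t2 := by
    obtain ⟨s1, s2, e0, e1, e2, e3⟩ := O.Dr_split hD3 hmr
    have hs1 : s1 = [] := by
      rcases e3 with e3 | ⟨p1, p2, t', a, g1, g2, g3, g4⟩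
      · exact e3
      · have haA : a ∈ A := by
          obtain ⟨x, y, hxy, hy, hy0⟩ := lp_right (t1 := t1) hL hM hN hA hT ht1' ht3
            (hL _ _ (O.append (O.refl t1)
              (O.le_of_sublist (List.sublist_append_right t2 t3))) ht)
          cases x with
          | nil => exact absurd rfl hy0
          | cons a' x =>
            rw [g3] at hxy
            simp at hxy
            rw [hxy.1]; exact hy a' (by simp)
        cases p2 with
        | nil => exact absurd rfl g2
        | cons b' p2 =>
          rw [hr] at g1
          simp at g1
          rw [← g1.1] at g4
          have hw := O.wt_le g4
          have := hbmax a haA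
          change O.wt _ ≤ O.wt _ at hw
          simp at hw
          exact O.wt_eq_zero (by omega)
    subst hs1
    simp at e0
    rw [e0]; exact e2
  refine ⟨t1, t2, t3, by simp, hD, hD3, ?_, hm, ht1, ht3'⟩
  exact ch hL hT ht1' ht3' (by simpa using ht)

lemma one_le_of_ne {w : List σ} (hw : w ≠ []) : O.le [O.one] w := by
  cases w with
  | nil => exact absurd rfl hw
  | cons a w => exact O.append (O.one_le a) (O.nil_le w)

lemma mem_of_le_max {A : Finset σ} {b : σ} (hbmax : ∀ a ∈ A, O.sz a ≤ O.sz b) {w : List σ}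
    (hw : Over A w) (h : O.le [b] w) : b ∈ w := by
  induction w with
  | nil => have := O.le_nil h; simp at this
  | cons t w ih =>
    obtain ⟨w1, w2, e, h1, h2⟩ := O.split (u := [t]) (v := w) h
    cases w1 with
    | nil =>
      simp at e; rw [← e] at h2
      exact List.mem_cons_of_mem _ (ih (fun x hx => hw x (by simp [hx])) h2)
    | cons c w1 =>
      simp at e
      obtain ⟨rfl, rfl, rfl⟩ := e
      have g1 := O.wt_le h1
      have g2 := hbmax t (hw t (by simp))
      simp at g1
      have := O.eq_of_wt h1 (by simp; omega)
      simp at this; simp [this]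

lemma one_b_left {A : Finset σ} {b : σ} (hbmax : ∀ a ∈ A, O.sz a ≤ O.sz b) {w : List σ}
    (hw : Over A w) (h : O.le [O.one, b] w) : O.le [b, O.one] w.reverse := by
  suffices hs : ∃ x y, w = x ++ b :: y ∧ x ≠ [] by
    obtain ⟨x, y, rfl, hx⟩ := hs
    have h1 : O.le ([b] ++ [O.one]) ((y.reverse ++ [b]) ++ x.reverse) :=
      O.append (O.le_of_sublist (List.sublist_append_right _ _))
        (one_le_of_ne (by simpa using hx))
    simpa using h1
  induction w with
  | nil => have := O.le_nil h; simp at this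
  | cons t w ih =>
    have hw' : Over A w := fun x hx => hw x (by simp [hx])
    obtain ⟨w1, w2, e, h1, h2⟩ := O.split (u := [t]) (v := w) h
    match w1 with
    | [] =>
      simp at e; rw [← e] at h2
      obtain ⟨x, y, rfl, hx⟩ := ih hw' h2
      exact ⟨t :: x, y, rfl, by simp⟩
    | [c] =>
      simp at e
      obtain ⟨rfl, rfl⟩ := e
      obtain ⟨x, y, rfl⟩ := List.append_of_mem (mem_of_le_max hbmax hw' h2)
      exact ⟨t :: x, y, rfl, by simp⟩
    | c :: d :: w1 =>
      simp at e
      obtain ⟨rfl, rfl, rfl, rfl⟩ := e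
      have g1 := O.wt_le h1
      have g2 := hbmax t (hw t (by simp))
      simp [O.sz_one] at g1
      omega

lemma one_b_right {A : Finset σ} {b : σ} (hbmax : ∀ a ∈ A, O.sz a ≤ O.sz b) {w : List σ}
    (hw : Over A w) (h : O.le [b, O.one] w) : O.le [O.one, b] w.reverse := by
  have := one_b_left (O := O.rev) (A := A) (b := b) hbmax (w := w.reverse)
    (fun x hx => hw x (by simpa using hx)) (by simpa [rev] using h)
  simpa [rev] using this

/-- Wilf equivalence of words -/
def WilfW (O : WordOrder σ) (L : Set (List σ)) (α β : List σ) : Prop :=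
  ∀ n, (Tset O L α n).ncard = (Tset O L β n).ncard

lemma over_reverse {A : Finset σ} {w : List σ} (h : Over A w) : Over A w.reverse :=
  fun x hx => h x (by simpa using hx)

theorem expo_wilf {L : Set (List σ)} (hL : O.DC L) {M N : ℕ} (hM : ∀ a, O.sz a ≤ M) (hN : 0 < N)
    (hP : Pump O L N) {u v : List σ} {A : Finset σ} (hT : Tight L N u A v)
    {b : σ} (hb : b ∈ A) (hbmax : ∀ a ∈ A, O.sz a ≤ O.sz b) :
    WilfW O L
      ((u ++ pw A.toList (2*N+2*M) ++ [b]) ++ [O.one, b] ++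
        ([b] ++ pw A.toList (2*N+2*M) ++ v))
      ((u ++ pw A.toList (2*N+2*M) ++ [b]) ++ [b, O.one] ++
        ([b] ++ pw A.toList (2*N+2*M) ++ v)) := by
  intro n
  have hA : A.Nonempty := ⟨b, hb⟩
  have key : ∀ m m' : List σ, (∀ w, Over A w → O.le m w → O.le m' w.reverse) →
      (Tset O L ((u ++ pw A.toList (2*N+2*M) ++ [b]) ++ m ++
        ([b] ++ pw A.toList (2*N+2*M) ++ v)) n).ncard ≤
      (Tset O L ((u ++ pw A.toList (2*N+2*M) ++ [b]) ++ m' ++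
        ([b] ++ pw A.toList (2*N+2*M) ++ v)) n).ncard := by
    intro m m' hmm
    apply inj_count (φ := List.reverse) List.reverse_injective (fun w => by simp)
      (p := u ++ pw A.toList (2*N+2*M) ++ [b]) (r := [b] ++ pw A.toList (2*N+2*M) ++ v)
    intro t ht hle
    obtain ⟨t1, t2, t3, rfl, h1, h3, h2, hm, g1, g3⟩ := expo_host hL hM hN hT hb hbmax hle ht
    refine ⟨t1, t2, t3, rfl, h1, h3, ?_, ?_⟩
    · refine lp_insert hL hM hN hP hA hT g1 g3 ?_ (over_reverse h2)
      exact hL _ _ (O.append (O.le_of_sublist (List.sublist_append_left t1 t2)) (O.refl t3)) ht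
    · exact O.append (O.append h1.1 (hmm _ h2 hm)) (O.Dr_le h3)
  exact le_antisymm (key _ _ (fun w hw h => one_b_left hbmax hw h))
    (key _ _ (fun w hw h => one_b_right hbmax hw h))

end WordOrder
end WC

namespace WC
namespace WordOrder
open Classical
set_option linter.unusedSectionVars false
variable {σ : Type} [Fintype σ] {O : WordOrder σ}

/-! ### Polynomial case -/

/-- a block of `k` trivial letters -/
def E (O : WordOrder σ) (k : ℕ) : List σ := List.replicate k O.one

lemma E_add (i j : ℕ) : E O (i+j) = E O i ++ E O j := by
  rw [E, E, E, List.replicate_append_replicate]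

lemma pw_one (k : ℕ) : pw ({O.one} : Finset σ).toList k = E O k := by
  simp only [Finset.toList_singleton, E]
  induction k with
  | zero => simp
  | succ k ih => rw [pw_succ, ih, List.replicate_succ]; rfl

lemma E_le {i j : ℕ} (h : i ≤ j) : O.le (E O i) (E O j) := by
  obtain ⟨k, rfl⟩ := Nat.exists_eq_add_of_le h
  rw [E_add]; exact O.le_of_sublist (List.sublist_append_left _ _)

lemma E_prefix {k : ℕ} {x y s : List σ} (h : E O k ++ x = s ++ y) (hs : s.length ≤ k) :
    s = E O s.length ∧ y = E O (k - s.length) ++ x := by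
  rw [show k = s.length + (k - s.length) by omega, E_add, List.append_assoc] at h
  obtain ⟨h1, h2⟩ := List.append_inj h (by simp [E])
  refine ⟨h1.symm, ?_⟩
  rw [← h2]

lemma E_suffix {k : ℕ} {x y s : List σ} (h : x ++ E O k = y ++ s) (hs : s.length ≤ k) :
    s = E O s.length ∧ y = x ++ E O (k - s.length) := by
  rw [show k = (k - s.length) + s.length by omega, E_add, ← List.append_assoc] at h
  obtain ⟨h1, h2⟩ := List.append_inj' h (by simp [E])
  exact ⟨h2.symm, h1.symm⟩

lemma cancel_left {y T : List σ} (h : O.le (O.one :: y) (O.one :: T)) : O.le y T := by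
  obtain ⟨w1, w2, e, h1, h2⟩ := O.split (u := [O.one]) (v := T) h
  match w1 with
  | [] => simp at e; rw [← e] at h2
          exact O.trans (O.le_of_sublist (List.sublist_cons_self _ _)) h2
  | [c] => simp at e; rw [e.2]; exact h2
  | c :: d :: w1 =>
    have g1 := O.wt_le h1
    have := O.sz_pos c
    have := O.sz_pos d
    simp [O.sz_one] at g1
    omega

lemma cancel_right {y T : List σ} (h : O.le (y ++ [O.one]) (T ++ [O.one])) : O.le y T := by
  have := cancel_left (O := O.rev) (y := y.reverse) (T := T.reverse) (by simpa [rev] using h)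
  simpa [rev] using this

lemma poly_host {L : Set (List σ)} (hL : O.DC L) {M N : ℕ} (hM : ∀ a, O.sz a ≤ M)
    {u w v : List σ} (hT1 : Tight L N u {O.one} (w ++ (E O N ++ v)))
    (hT2 : Tight L N (u ++ E O N ++ w) {O.one} v) {k k' : ℕ}
    (hk : 2*M+2*N+1 ≤ k) (hk' : 2*M+2*N+1 ≤ k') {t : List σ} (ht : t ∈ L)
    (h : O.le ((u ++ E O (2*N+2*M)) ++ (E O k ++ w ++ E O k') ++ (E O (2*N+2*M) ++ v)) t) :
    ∃ t1 t2 t3 i j x y, t = t1 ++ t2 ++ t3 ∧ O.Dl (u ++ E O (2*N+2*M)) t1 ∧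
      O.Dr (E O (2*N+2*M) ++ v) t3 ∧ i ≤ M ∧ j ≤ M ∧
      O.le (u ++ E O (2*N+2*M) ++ E O i) t1 ∧ O.le (E O j ++ (E O (2*N+2*M) ++ v)) t3 ∧
      O.le (E O (k-i) ++ w ++ E O (k'-j)) t2 ∧ t2 = O.one :: x ∧ t2 = y ++ [O.one] := by
  set p := u ++ E O (2*N+2*M) with hp
  set r := E O (2*N+2*M) ++ v with hr
  rw [List.append_assoc] at h
  obtain ⟨t1, T, s1, s2, rfl, e0, el, hD, e1, e2⟩ := O.split_left hM h
  obtain ⟨e3, e4⟩ := E_prefix (O := O) (k := k) (x := w ++ (E O k' ++ r)) (s := s1) (y := s2)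
    (by rw [← e0]; simp) (by omega)
  rw [e4, ← List.append_assoc, ← List.append_assoc] at e2
  obtain ⟨t3, t2, s3, s4, rfl, f0, fl, hD3, f1, f2⟩ := O.split_right hM e2
  obtain ⟨f3, f4⟩ := E_suffix (O := O) f0 (by omega)
  rw [f4] at f2
  rw [e3] at e1
  rw [f3] at f1
  have hpt : O.le (u ++ E O N) t1 :=
    O.trans (O.append (O.refl u) (E_le (by omega))) hD.1
  have hrt : O.le (E O N ++ v) t3 :=
    O.trans (O.append (E_le (by omega)) (O.refl v)) (O.Dr_le hD3)
  refine ⟨t1, t2, t3, s1.length, s3.length, t2.tail, t2.dropLast, by simp, hD, hD3, el, fl, e1, f1,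
    f2, ?_, ?_⟩
  · cases t2 with
    | nil =>
      have := congrArg List.length (O.le_nil f2)
      simp [E] at this; omega
    | cons t T' =>
      have : Over {O.one} [t] := by
        apply ch hL hT1 (t1 := t1) (t3 := T' ++ t3)
        · rw [pw_one]; exact hpt
        · rw [pw_one]
          obtain ⟨w1, w2, g0, g1, g2⟩ := O.split (u := [t]) (v := T') f2
          have gl := O.len_le_of_le_singleton hM g1
          obtain ⟨-, g4⟩ := E_prefix (O := O) (k := k - s1.length) (x := w ++ E O (k'-s3.length)) (s := w1) (y := w2)
            (by rw [← g0]; simp) (by omega)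
          have : E O N ++ (w ++ (E O N ++ v)) = (E O N ++ w) ++ (E O N ++ v) := by simp
          rw [this]
          refine O.append (O.trans ?_ g2) hrt
          rw [g4, ← List.append_assoc]
          exact O.trans (O.append (E_le (by omega)) (O.refl w))
            (O.le_of_sublist (List.sublist_append_left _ _))
        · simpa using ht
      have := this t (by simp)
      simp at this; simp [this]
  · rcases List.eq_nil_or_concat' t2 with rfl | ⟨T', t, rfl⟩
    · have := congrArg List.length (O.le_nil f2)
      simp [E] at this; omega
    · have : Over {O.one} [t] := by
        apply ch hL hT2 (t1 := t1 ++ T') (t3 := t3)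
        · rw [pw_one]
          obtain ⟨w1, w2, g0, g1, g2⟩ := O.split (u := T') (v := [t]) f2
          have gl := O.len_le_of_le_singleton hM g2
          obtain ⟨-, g4⟩ := E_suffix (O := O) g0 (by omega)
          have : u ++ E O N ++ w ++ E O N = (u ++ E O N) ++ (w ++ E O N) := by simp
          rw [this]
          refine O.append hpt (O.trans ?_ g1)
          rw [g4]
          rw [List.append_assoc]
          exact O.trans (O.append (O.refl w) (E_le (by omega)))
            (O.le_of_sublist (List.sublist_append_right _ _))
        · rw [pw_one]; exact hrt
        · simpa using ht
      have := this t (by simp)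
      simp at this; simp [this]

lemma wt_perm {u v : List σ} (h : u.Perm v) : O.wt u = O.wt v := by
  unfold wt; exact (h.map O.sz).sum_eq

theorem poly_wilf {L : Set (List σ)} (hL : O.DC L) {M N : ℕ} (hM : ∀ a, O.sz a ≤ M)
    (hN : 0 < N) (hP : Pump O L N)
    {u w v : List σ} (hT1 : Tight L N u {O.one} (w ++ (E O N ++ v)))
    (hT2 : Tight L N (u ++ E O N ++ w) {O.one} v) {k k' : ℕ}
    (hk : 2*M+2*N+1 ≤ k) (hk' : 2*M+2*N+1 ≤ k') :
    WilfW O L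
      ((u ++ E O (2*N+2*M)) ++ (E O (k+1) ++ w ++ E O k') ++ (E O (2*N+2*M) ++ v))
      ((u ++ E O (2*N+2*M)) ++ (E O k ++ w ++ E O (k'+1)) ++ (E O (2*N+2*M) ++ v)) := by
  intro n
  have hA : ({O.one} : Finset σ).Nonempty := by simp
  apply le_antisymm
  · apply inj_count (φ := fun l => l.rotate 1) (List.rotate_injective 1)
      (fun w => wt_perm (List.rotate_perm w 1))
      (p := u ++ E O (2*N+2*M)) (r := E O (2*N+2*M) ++ v)
    intro t ht hle
    obtain ⟨t1, t2, t3, i, j, x, y, rfl, h1, h3, hi, hj, g1, g3, g2, rfl, e2⟩ :=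
      poly_host hL hM hT1 hT2 (k := k+1) (k' := k') (by omega) hk' ht hle
    refine ⟨t1, _, t3, rfl, h1, h3, ?_⟩
    have hx : O.le (E O (k-i) ++ w ++ E O (k'-j)) x := by
      apply cancel_left
      rw [show k + 1 - i = 1 + (k - i) by omega, E_add] at g2
      simpa [E] using g2
    have hrot : (O.one :: x).rotate 1 = x ++ [O.one] := by simp
    simp only [hrot]
    constructor
    · have := lp_insert hL hM hN hP hA hT2 (t1 := t1 ++ x) (t3 := t3) (y := [O.one]) ?_ ?_ ?_ ?_
      · simpa using this
      · rw [pw_one]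
        have : u ++ E O N ++ w ++ E O (2*N+M) = (u ++ E O N) ++ (w ++ E O (2*N+M)) := by simp
        rw [this]
        refine O.append (O.trans (O.append (O.refl u) (E_le (by omega))) h1.1) (O.trans ?_ hx)
        rw [List.append_assoc]
        exact O.trans (O.append (O.refl w) (E_le (by omega)))
            (O.le_of_sublist (List.sublist_append_right _ _))
      · rw [pw_one]
        exact O.trans (O.append (E_le (by omega)) (O.refl v)) (O.Dr_le h3)
      · apply hL _ _ _ ht
        apply O.le_of_sublist
        simp
      · intro x hx; simpa using hx
    · have : u ++ E O (2*N+2*M) ++ (E O k ++ w ++ E O (k'+1)) ++ (E O (2*N+2*M) ++ v) =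
        (u ++ E O (2*N+2*M) ++ E O i) ++ ((E O (k-i) ++ w ++ E O (k'-j)) ++ [O.one]) ++
        (E O j ++ (E O (2*N+2*M) ++ v)) := by
        have ek : E O k = E O i ++ E O (k-i) := by rw [← E_add]; congr 1; omega
        have ek' : E O (k'+1) = E O (k'-j) ++ ([O.one] ++ E O j) := by
          rw [show [O.one] = E O 1 from rfl, ← E_add, ← E_add]; congr 1; omega
        rw [ek, ek']
        simp only [List.append_assoc]
      rw [this]
      exact O.append (O.append g1 (O.append hx (O.refl _))) g3
  · apply inj_count (φ := fun l => (l.reverse.rotate 1).reverse)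
      (fun a b hab => by
        have := List.reverse_injective hab
        exact List.reverse_injective (List.rotate_injective 1 this))
      (fun w => by rw [wt_reverse, wt_perm (List.rotate_perm _ 1), wt_reverse])
      (p := u ++ E O (2*N+2*M)) (r := E O (2*N+2*M) ++ v)
    intro t ht hle
    obtain ⟨t1, t2, t3, i, j, x, y, rfl, h1, h3, hi, hj, g1, g3, g2, e1, rfl⟩ :=
      poly_host hL hM hT1 hT2 (k := k) (k' := k'+1) hk (by omega) ht hle
    refine ⟨t1, _, t3, rfl, h1, h3, ?_⟩
    have hx : O.le (E O (k-i) ++ w ++ E O (k'-j)) y := by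
      apply cancel_right
      rw [show k' + 1 - j = (k' - j) + 1 by omega, E_add] at g2
      simpa [E] using g2
    have hrot : ((y ++ [O.one]).reverse.rotate 1).reverse = [O.one] ++ y := by simp
    simp only [hrot]
    constructor
    · have := lp_insert hL hM hN hP hA hT1 (t1 := t1) (t3 := y ++ t3) (y := [O.one]) ?_ ?_ ?_ ?_
      · simpa using this
      · rw [pw_one]
        exact O.trans (O.append (O.refl u) (E_le (by omega))) h1.1
      · rw [pw_one]
        have : E O N ++ (w ++ (E O N ++ v)) = (E O N ++ w) ++ (E O N ++ v) := by simp
        rw [this]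
        refine O.append (O.trans ?_ hx)
          (O.trans (O.append (E_le (by omega)) (O.refl v)) (O.Dr_le h3))
        exact O.trans (O.append (E_le (by omega)) (O.refl w))
            (O.le_of_sublist (List.sublist_append_left _ _))
      · apply hL _ _ _ ht
        apply O.le_of_sublist
        simp
      · intro x hx; simpa using hx
    · have : u ++ E O (2*N+2*M) ++ (E O (k+1) ++ w ++ E O k') ++ (E O (2*N+2*M) ++ v) =
        (u ++ E O (2*N+2*M) ++ E O i) ++ ([O.one] ++ (E O (k-i) ++ w ++ E O (k'-j))) ++
        (E O j ++ (E O (2*N+2*M) ++ v)) := by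
        have ek : E O (k+1) = E O i ++ ([O.one] ++ E O (k-i)) := by
          rw [show [O.one] = E O 1 from rfl, ← E_add, ← E_add]; congr 1; omega
        have ek' : E O k' = E O (k'-j) ++ E O j := by rw [← E_add]; congr 1; omega
        rw [ek, ek']
        simp only [List.append_assoc]
      rw [this]
      exact O.append (O.append g1 (O.append (O.refl _) hx)) g3

end WordOrder
end WC

namespace WC
namespace WordOrder
open Classical
open scoped ENNReal
set_option linter.unusedSectionVars false
variable {σ : Type} [Fintype σ] {O : WordOrder σ} {y : ℝ≥0∞}

/-- the mass of a set of words -/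
noncomputable def mu (O : WordOrder σ) (y : ℝ≥0∞) (S : Set (List σ)) : ℝ≥0∞ :=
  ∑' w : S, y ^ O.wt w.1

/-- words of weight at most `n` -/
def upto (O : WordOrder σ) (S : Set (List σ)) (n : ℕ) : Set (List σ) := {w | w ∈ S ∧ O.wt w ≤ n}

/-- words of weight exactly `n` -/
def lvl (O : WordOrder σ) (S : Set (List σ)) (n : ℕ) : Set (List σ) := {w | w ∈ S ∧ O.wt w = n}

lemma mu_mono {S T : Set (List σ)} (h : S ⊆ T) : mu O y S ≤ mu O y T :=
  ENNReal.tsum_mono_subtype (fun w => y ^ O.wt w) h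

lemma mu_union_le (S T : Set (List σ)) : mu O y (S ∪ T) ≤ mu O y S + mu O y T :=
  ENNReal.tsum_union_le (fun w => y ^ O.wt w) S T

lemma mu_iUnion_le {ι : Type} (t : ι → Set (List σ)) :
    mu O y (⋃ i, t i) ≤ ∑' i, mu O y (t i) :=
  ENNReal.tsum_iUnion_le_tsum (fun w => y ^ O.wt w) t

lemma mu_biUnion_le {ι : Type} (s : Finset ι) (t : ι → Set (List σ)) :
    mu O y (⋃ i ∈ s, t i) ≤ ∑ i ∈ s, mu O y (t i) :=
  ENNReal.tsum_biUnion_le (fun w => y ^ O.wt w) s t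

lemma mu_image {g : List σ → List σ} (hg : Function.Injective g) {d : ℕ}
    (hd : ∀ w, O.wt (g w) = d + O.wt w) (S : Set (List σ)) :
    mu O y (g '' S) = y ^ d * mu O y S := by
  unfold mu
  rw [tsum_image (fun w => y ^ O.wt w) hg.injOn, ← ENNReal.tsum_mul_left]
  congr 1; ext w
  rw [hd, pow_add]

lemma mu_cover {S I : Set (List σ)} {t : List σ → Set (List σ)} {C : ℝ≥0∞}
    (hS : S ⊆ ⋃ i ∈ I, t i) (ht : ∀ i ∈ I, mu O y (t i) ≤ y ^ O.wt i * C) :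
    mu O y S ≤ mu O y I * C := by
  refine (mu_mono hS).trans ?_
  refine (ENNReal.tsum_biUnion_le_tsum (fun w => y ^ O.wt w) I t).trans ?_
  unfold mu
  rw [← ENNReal.tsum_mul_right]
  exact ENNReal.tsum_le_tsum (fun i => ht i.1 i.2)

lemma mu_cover_ge {S I : Set (List σ)} {t : List σ → Set (List σ)} {C : ℝ≥0∞}
    (hd : I.PairwiseDisjoint t)
    (hS : (⋃ i ∈ I, t i) ⊆ S) (ht : ∀ i ∈ I, y ^ O.wt i * C ≤ mu O y (t i)) :
    mu O y I * C ≤ mu O y S := by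
  refine le_trans ?_ (mu_mono hS)
  refine le_trans ?_ (ENNReal.tsum_biUnion' (f := fun w => y ^ O.wt w) hd).ge
  unfold mu
  rw [← ENNReal.tsum_mul_right]
  exact ENNReal.tsum_le_tsum (fun i => ht i.1 i.2)

lemma mu_lvl (S : Set (List σ)) (n : ℕ) :
    mu O y (lvl O S n) = (lvl O S n).ncard * y ^ n := by
  have hf : (lvl O S n).Finite := (finite_wt O n).subset (fun _ h => h.2.le)
  unfold mu
  have : ∀ w : lvl O S n, y ^ O.wt w.1 = y ^ n := fun w => by rw [w.2.2]
  simp_rw [this]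
  rw [ENNReal.tsum_set_const, ← hf.cast_ncard_eq]
  simp

lemma mu_finite (hy : y ≤ 1) {S : Set (List σ)} (hS : S.Finite) : mu O y S ≠ ⊤ := by
  have : mu O y S ≤ S.encard * 1 := by
    rw [← ENNReal.tsum_set_const]
    exact ENNReal.tsum_le_tsum (fun i => pow_le_one₀ zero_le hy)
  refine ne_top_of_le_ne_top ?_ this
  rw [← hS.cast_ncard_eq]; simp

lemma mu_upto_eq (S : Set (List σ)) (n : ℕ) :
    mu O y (upto O S n) = ∑ k ∈ Finset.range (n+1), mu O y (lvl O S k) := by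
  have h : upto O S n = ⋃ k ∈ (Finset.range (n+1) : Set ℕ), lvl O S k := by
    ext w; simp [upto, lvl]
  unfold mu
  rw [h, ENNReal.tsum_biUnion' (f := fun w => y ^ O.wt w)]
  · rw [← Finset.tsum_subtype (Finset.range (n+1)) (fun k => ∑' w : lvl O S k, y ^ O.wt w.1)]
    rfl
  · intro i _ j _ hij
    refine Set.disjoint_left.2 ?_
    rintro w ⟨_, h1⟩ ⟨_, h2⟩
    exact hij (h1.symm.trans h2)

lemma inj_left (x : List σ) : Function.Injective (fun v => x ++ v) :=
  fun _ _ h => List.append_cancel_left h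

lemma inj_right (x : List σ) : Function.Injective (fun v => v ++ x) :=
  fun _ _ h => List.append_cancel_right h

lemma pow_wt_add_le (hy : y ≤ 1) (a b : ℕ) : y ^ (a + b) ≤ y ^ a :=
  pow_le_pow_right_of_le_one' hy (by omega)

lemma conv_upto (hy : y ≤ 1) {S X Y : Set (List σ)} {c : σ}
    (h : ∀ w ∈ S, ∃ x ∈ X, ∃ v ∈ Y, w = x ++ c :: v) (n : ℕ) :
    mu O y (upto O S n) ≤ mu O y (upto O X n) * mu O y (upto O Y n) := by
  apply mu_cover (t := fun x => (fun v => (x ++ [c]) ++ v) '' upto O Y n)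
  · rintro w ⟨hw, hn⟩
    obtain ⟨x, hx, v, hv, rfl⟩ := h w hw
    simp at hn
    simp only [Set.mem_iUnion]
    exact ⟨x, ⟨hx, by omega⟩, v, ⟨hv, by omega⟩, by simp⟩
  · intro x _
    rw [mu_image (inj_left _) (d := O.wt x + O.sz c) (fun w => by simp; omega)]
    exact mul_le_mul' (pow_wt_add_le hy _ _) le_rfl

lemma conv_lvl (hy : y ≤ 1) {S X Y : Set (List σ)} {c : σ}
    (h : ∀ w ∈ S, ∃ x ∈ X, ∃ v ∈ Y, w = x ++ c :: v) (n : ℕ) {C : ℝ≥0∞}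
    (hC : ∀ k ≤ n, mu O y (lvl O Y k) ≤ C) :
    mu O y (lvl O S n) ≤ mu O y (upto O X n) * C := by
  apply mu_cover (t := fun x => (fun v => (x ++ [c]) ++ v) '' lvl O Y (n - O.wt x - O.sz c))
  · rintro w ⟨hw, hn⟩
    obtain ⟨x, hx, v, hv, rfl⟩ := h w hw
    simp at hn
    simp only [Set.mem_iUnion]
    exact ⟨x, ⟨hx, by omega⟩, v, ⟨hv, by omega⟩, by simp⟩
  · intro x _
    rw [mu_image (inj_left _) (d := O.wt x + O.sz c) (fun w => by simp; omega)]
    exact mul_le_mul' (pow_wt_add_le hy _ _) (hC _ (by omega))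

lemma conv_lvl' (hy : y ≤ 1) {S X Y : Set (List σ)} {c : σ}
    (h : ∀ w ∈ S, ∃ x ∈ X, ∃ v ∈ Y, w = x ++ c :: v) (n : ℕ) {C : ℝ≥0∞}
    (hC : ∀ k ≤ n, mu O y (lvl O X k) ≤ C) :
    mu O y (lvl O S n) ≤ mu O y (upto O Y n) * C := by
  apply mu_cover (t := fun v => (fun x => x ++ (c :: v)) '' lvl O X (n - O.wt v - O.sz c))
  · rintro w ⟨hw, hn⟩
    obtain ⟨x, hx, v, hv, rfl⟩ := h w hw
    simp at hn
    simp only [Set.mem_iUnion]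
    exact ⟨v, ⟨hv, by omega⟩, x, ⟨hx, by omega⟩, by simp⟩
  · intro v _
    rw [mu_image (inj_right _) (d := O.wt v + O.sz c) (fun w => by simp; omega)]
    exact mul_le_mul' (pow_wt_add_le hy _ _) (hC _ (by omega))

/-- thin sets have finite mass -/
lemma thin {S X : Set (List σ)} (hy : y ≤ 1) {l : ℕ} (hl : 0 < l) (hX : mu O y X < 1)
    (hlen : ∀ x ∈ X, x.length = l)
    (h : ∀ w ∈ S, l ≤ w.length → ∃ x ∈ X, ∃ v ∈ S, w = x ++ v) : mu O y S ≠ ⊤ := by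
  let R : ℕ → Set (List σ) := fun q => {w | w ∈ S ∧ w.length / l = q}
  have hR : ∀ q, mu O y (R q) ≤ mu O y X ^ q * mu O y (R 0) := by
    intro q
    induction q with
    | zero => simp
    | succ q ih =>
      have : mu O y (R (q+1)) ≤ mu O y X * mu O y (R q) := by
        apply mu_cover (t := fun x => (fun v => x ++ v) '' R q)
        · rintro w ⟨hw, hq⟩
          have hlw : l ≤ w.length := by
            by_contra hcon
            rw [Nat.div_eq_of_lt (by omega)] at hq
            omega
          obtain ⟨x, hx, v, hv, rfl⟩ := h w hw hlw
          simp only [Set.mem_iUnion]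
          refine ⟨x, hx, v, ⟨hv, ?_⟩, rfl⟩
          simp only [List.length_append, hlen x hx] at hq
          rw [Nat.add_div_left _ hl] at hq
          simpa using hq
        · intro x _
          rw [mu_image (inj_left _) (d := O.wt x) (fun w => by simp)]
      refine this.trans ?_
      rw [pow_succ', mul_assoc]
      gcongr
  have h0 : mu O y (R 0) ≠ ⊤ := by
    apply mu_finite hy
    refine (List.finite_length_le σ l).subset ?_
    rintro w ⟨_, hw⟩
    rw [Nat.div_eq_zero_iff] at hw
    simp; omega
  have hS : S ⊆ ⋃ q, R q := by
    intro w hw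
    simp only [Set.mem_iUnion]
    exact ⟨_, hw, rfl⟩
  have : mu O y S ≤ (1 - mu O y X)⁻¹ * mu O y (R 0) := by
    refine (mu_mono hS).trans ((mu_iUnion_le R).trans ?_)
    rw [← ENNReal.tsum_geometric, ← ENNReal.tsum_mul_right]
    exact ENNReal.tsum_le_tsum hR
  refine ne_top_of_le_ne_top (ENNReal.mul_ne_top ?_ h0) this
  simpa [tsub_eq_zero_iff_le] using hX

/-- letter mass -/
noncomputable def sA (O : WordOrder σ) (y : ℝ≥0∞) (A : Finset σ) : ℝ≥0∞ := ∑ a ∈ A, y ^ O.sz a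

/-- all words over `A` -/
def star (A : Finset σ) : Set (List σ) := {w | Over A w}

lemma mu_singleton (w : List σ) : mu O y {w} = y ^ O.wt w := by
  unfold mu
  rw [tsum_singleton w (fun w => y ^ O.wt w)]

lemma mu_letters (A : Finset σ) : mu O y {w | ∃ a ∈ A, w = [a]} ≤ sA O y A := by
  have : {w | ∃ a ∈ A, w = [a]} = ⋃ a ∈ A, ({[a]} : Set (List σ)) := by
    ext w; simp
  rw [this]
  refine (mu_biUnion_le _ _).trans ?_
  unfold sA
  apply Finset.sum_le_sum
  intro a _
  rw [mu_singleton]; simp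

lemma thin_small (hy : y ≤ 1) {A : Finset σ} (hA : sA O y A < 1) : mu O y (star A) ≠ ⊤ := by
  apply thin hy one_pos ((mu_letters A).trans_lt hA)
  · rintro x ⟨a, -, rfl⟩; simp
  · intro w hw hl
    cases w with
    | nil => simp at hl
    | cons a w => exact ⟨[a], ⟨a, hw a (by simp), rfl⟩, w, fun x hx => hw x (by simp [hx]), rfl⟩

lemma mu_len (A : Finset σ) (hA : sA O y A ≤ 1) (l : ℕ) :
    mu O y {w | Over A w ∧ w.length = l} ≤ 1 := by
  induction l with
  | zero =>
    refine (mu_mono (T := {[]}) ?_).trans ?_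
    · rintro w ⟨_, hw⟩; simpa using hw
    · rw [mu_singleton]; simp
  | succ l ih =>
    have : mu O y {w | Over A w ∧ w.length = l+1} ≤
        mu O y {w | ∃ a ∈ A, w = [a]} * mu O y {w | Over A w ∧ w.length = l} := by
      apply mu_cover (t := fun x => (fun v => x ++ v) '' {w | Over A w ∧ w.length = l})
      · rintro w ⟨hw, hl⟩
        simp only [Set.mem_iUnion]
        cases w with
        | nil => simp at hl
        | cons a w =>
          exact ⟨[a], ⟨a, hw a (by simp), rfl⟩, w, ⟨fun x hx => hw x (by simp [hx]),
            by simpa using hl⟩, rfl⟩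
      · intro x _
        rw [mu_image (inj_left _) (d := O.wt x) (fun w => by simp)]
    refine this.trans ?_
    calc _ ≤ (1 : ℝ≥0∞) * 1 := by
          gcongr
          exact (mu_letters A).trans hA
      _ = 1 := by simp

lemma thin_avoid (hy : y ≤ 1) (hy0 : 0 < y) {A : Finset σ} (hA : sA O y A ≤ 1) {U : List σ}
    (hU : U ≠ []) (hUA : Over A U) :
    mu O y {w | Over A w ∧ ¬ ∃ x z, w = x ++ U ++ z} ≠ ⊤ := by
  have hl : 0 < U.length := List.length_pos_iff.2 hU
  apply thin hy hl (X := {w | Over A w ∧ w.length = U.length ∧ w ≠ U})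
  · have hsum : mu O y {w | Over A w ∧ w.length = U.length ∧ w ≠ U} + y ^ O.wt U ≤ 1 := by
      refine le_trans (le_of_eq ?_) (mu_len A hA U.length)
      rw [← mu_singleton]
      have hset : {w | Over A w ∧ w.length = U.length} =
          {w | Over A w ∧ w.length = U.length ∧ w ≠ U} ∪ {U} := by
        ext w
        constructor
        · rintro ⟨h1, h2⟩
          by_cases hw : w = U
          exacts [Or.inr hw, Or.inl ⟨h1, h2, hw⟩]
        · rintro (h | rfl)
          exacts [⟨h.1, h.2.1⟩, ⟨hUA, rfl⟩]
      rw [hset]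
      unfold mu
      rw [ENNReal.summable.tsum_union_disjoint (f := fun w => y ^ O.wt w) _ ENNReal.summable]
      · rw [Set.disjoint_singleton_right]; simp
    have hp : 0 < y ^ O.wt U := ENNReal.pow_pos hy0 _
    refine lt_of_lt_of_le (ENNReal.lt_add_right ?_ hp.ne') hsum
    exact ne_top_of_le_ne_top ENNReal.one_ne_top (le_trans le_self_add hsum)
  · rintro x ⟨_, h, _⟩; exact h
  · rintro w ⟨hw, ha⟩ hlw
    refine ⟨w.take U.length, ⟨?_, by simpa using hlw, ?_⟩, w.drop U.length, ⟨?_, ?_⟩, by simp⟩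
    · intro x hx; exact hw x (List.mem_of_mem_take hx)
    · intro he
      apply ha
      refine ⟨[], w.drop U.length, ?_⟩
      conv_lhs => rw [← List.take_append_drop U.length w, he]
      simp
    · intro x hx; exact hw x (List.mem_of_mem_drop hx)
    · rintro ⟨x, z, he⟩
      apply ha
      refine ⟨w.take U.length ++ x, z, ?_⟩
      conv_lhs => rw [← List.take_append_drop U.length w, he]
      simp

lemma star_lvl_le {A : Finset σ} (hA : sA O y A ≤ 1) (n : ℕ) :
    mu O y (lvl O (star A) n) ≤ 1 := by
  induction n using Nat.strong_induction_on with
  | _ n ih =>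
    rcases Nat.eq_zero_or_pos n with rfl | hn
    · refine (mu_mono (T := {[]}) ?_).trans ?_
      · rintro w ⟨_, hw⟩; simpa using O.wt_eq_zero hw
      · rw [mu_singleton]; simp
    · have : mu O y (lvl O (star A) n) ≤ mu O y {w | ∃ a ∈ A, w = [a]} * 1 := by
        apply mu_cover (t := fun x => if O.wt x = 0 then ∅ else
          (fun v => x ++ v) '' lvl O (star A) (n - O.wt x))
        · rintro w ⟨hw, hl⟩
          simp only [Set.mem_iUnion]
          cases w with
          | nil => simp at hl; omega
          | cons a w =>
            simp at hl
            have := O.sz_pos a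
            refine ⟨[a], ⟨a, hw a (by simp), rfl⟩, ?_⟩
            rw [if_neg (by simp; omega)]
            exact ⟨w, ⟨fun x hx => hw x (by simp [hx]), by simp; omega⟩, rfl⟩
        · intro x _
          split_ifs with h0
          · simp [mu]
          · rw [mu_image (inj_left _) (d := O.wt x) (fun w => by simp)]
            gcongr
            exact ih _ (by omega)
      refine this.trans ?_
      rw [mul_one]
      exact (mu_letters A).trans hA

lemma star_lvl_ge (hy : y ≤ 1) {M : ℕ} (hM : ∀ a, O.sz a ≤ M) {A : Finset σ}
    (hA : sA O y A = 1) (h1 : O.one ∈ A) (n : ℕ) :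
    y ^ M ≤ mu O y (lvl O (star A) n) := by
  induction n using Nat.strong_induction_on with
  | _ n ih =>
    rcases Nat.lt_or_ge n M with hn | hn
    · have hsub : {E O n} ⊆ lvl O (star A) n := by
        rintro w rfl
        refine ⟨?_, ?_⟩
        · intro x hx
          rw [List.eq_of_mem_replicate hx]; exact h1
        · simp [E, wt, O.sz_one]
      refine le_trans ?_ (mu_mono hsub)
      rw [mu_singleton, (hsub rfl).2]
      exact pow_le_pow_right_of_le_one' hy hn.le
    · have : mu O y {w | ∃ a ∈ A, w = [a]} * y ^ M ≤ mu O y (lvl O (star A) n) := by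
        apply mu_cover_ge (t := fun x => (fun v => x ++ v) '' lvl O (star A) (n - O.wt x))
        · rintro x ⟨a, ha, rfl⟩ z ⟨b, hb, rfl⟩ hab
          refine Set.disjoint_left.2 ?_
          rintro w ⟨v, _, rfl⟩ ⟨v', _, he⟩
          simp at he
          exact hab (by rw [he.1])
        · intro w hw
          simp only [Set.mem_iUnion] at hw
          obtain ⟨_, ⟨a, ha, rfl⟩, v, hv, rfl⟩ := hw
          refine ⟨?_, ?_⟩
          · intro x hx
            simp at hx
            rcases hx with rfl | hx
            exacts [ha, hv.1 x hx]
          · have := hv.2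
            have := hM a
            simp at *
            omega
        · rintro x ⟨a, ha, rfl⟩
          rw [mu_image (inj_left _) (d := O.wt [a]) (fun w => by simp)]
          gcongr
          have := O.sz_pos a
          exact ih _ (by simp; have := hM a; omega)
      refine le_trans ?_ this
      have hs : mu O y {w | ∃ a ∈ A, w = [a]} = sA O y A := by
        have : {w | ∃ a ∈ A, w = [a]} = ⋃ a ∈ (A : Set σ), ({[a]} : Set (List σ)) := by
          ext w; simp
        unfold mu
        rw [this, ENNReal.tsum_biUnion' (f := fun w => y ^ O.wt w)]
        · unfold sA
          rw [← Finset.tsum_subtype A (fun a => y ^ O.sz a)]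
          congr 1; ext a
          have := mu_singleton (O := O) (y := y) [a.1]
          unfold mu at this
          rw [this]; simp
        · intro a _ b _ hab
          simpa using hab
      rw [hs, hA, one_mul]

end WordOrder
end WC

namespace WC
namespace WordOrder
open Classical
open scoped ENNReal
set_option linter.unusedSectionVars false
variable {σ : Type} [Fintype σ] {O : WordOrder σ} {y : ℝ≥0∞}

/-- words of `K` which are not good at level `j` -/
def bad (Big : Finset σ → Prop) (U : Finset σ → List σ) (K : Set (List σ)) (j : ℕ) :
    Set (List σ) := {w | w ∈ K ∧ ¬ Good Big U j w}

lemma mu_cover_fin {S T : Set (List σ)} {F : Finset σ} {R : σ → Set (List σ)}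
    (h : ∀ w ∈ S, w ∈ T ∨ ∃ c ∈ F, w ∈ R c) :
    mu O y S ≤ mu O y T + ∑ c ∈ F, mu O y (R c) := by
  have : S ⊆ T ∪ ⋃ c ∈ F, R c := by
    intro w hw
    rcases h w hw with h | ⟨c, hc, h⟩
    · exact Or.inl h
    · right; simp only [Set.mem_iUnion]; exact ⟨c, hc, h⟩
  refine (mu_mono this).trans ((mu_union_le _ _).trans ?_)
  gcongr
  exact mu_biUnion_le _ _

lemma upto_star {B : Finset σ} (hB : sA O y B ≤ 1) (n : ℕ) :
    mu O y (upto O (star B) n) ≤ n + 1 := by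
  rw [mu_upto_eq]
  calc _ ≤ ∑ k ∈ Finset.range (n+1), (1 : ℝ≥0∞) := Finset.sum_le_sum (fun k _ => star_lvl_le hB k)
    _ = n + 1 := by simp

/-- decomposition of bad words -/
lemma bad_decomp (hy : y ≤ 1) (hy0 : 0 < y) {L : Set (List σ)} {Big : Finset σ → Prop}
    {U : Finset σ → List σ}
    (hle : ∀ A, star A ⊆ L → sA O y A ≤ 1) (hlt : ∀ A, star A ⊆ L → ¬ Big A → sA O y A < 1)
    (hU : ∀ A, Big A → U A ≠ []) (hUA : ∀ A, Big A → Over A (U A))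
    {K : Set (List σ)} (hK : O.DC K) (hKL : K ⊆ L) (hne : K.Nonempty) :
    sA O y (loop K) ≤ 1 ∧ ∃ Th : Set (List σ), mu O y Th ≠ ⊤ ∧ Th ⊆ star (loop K) ∧
     ∀ j, ∀ w ∈ bad Big U K (j+1),
      w ∈ Th ∨ (1 ≤ j ∧ w ∈ star (loop K)) ∨ ∃ c ∈ (loop K)ᶜ,
        (∃ x ∈ Th, ∃ v ∈ bad Big U (res K [c]) (j+1), w = x ++ c :: v) ∨
        (1 ≤ j ∧ ∃ x ∈ star (loop K), ∃ v ∈ bad Big U (res K [c]) j, w = x ++ c :: v) := by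
  have hst : star (loop K) ⊆ L := by
    intro w hw
    obtain ⟨v, hv⟩ := hne
    have := mem_of_loop (K := K) hw (v := []) (hK _ _ (O.nil_le v) hv)
    exact hKL (by simpa using this)
  refine ⟨hle _ hst, ?_⟩
  have hv : ∀ x c v, Over (loop K) x → x ++ c :: v ∈ K → v ∈ res K [c] := by
    intro x c v hx h
    have : c :: v ∈ res K x := h
    rw [res_loop hK hx] at this
    exact this
  by_cases hB : Big (loop K)
  · refine ⟨{w | Over (loop K) w ∧ ¬ ∃ x z, w = x ++ U (loop K) ++ z},
      thin_avoid hy hy0 (hle _ hst) (hU _ hB) (hUA _ hB), fun w hw => hw.1, ?_⟩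
    rintro j w ⟨hwK, hbad⟩
    rcases first_split (loop K) w with hl | ⟨x, c, v, rfl, hx, hc⟩
    · by_cases hf : ∃ x z, w = x ++ U (loop K) ++ z
      · right; left
        refine ⟨?_, hl⟩
        by_contra hj
        obtain rfl : j = 0 := by omega
        obtain ⟨x, z, hxz⟩ := hf
        exact hbad ⟨loop K, x, z, hB, hxz⟩
      · left; exact ⟨hl, hf⟩
    · right; right
      refine ⟨c, by simpa using hc, ?_⟩
      have hvr := hv x c v hx hwK
      by_cases hf : ∃ a z, x = a ++ U (loop K) ++ z
      · right
        obtain ⟨a, z, hxz⟩ := hf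
        cases j with
        | zero =>
          exact absurd ⟨loop K, a, z ++ c :: v, hB, by simp [hxz]⟩ hbad
        | succ j =>
          refine ⟨by omega, x, hx, v, ⟨hvr, fun hg => hbad ?_⟩, rfl⟩
          exact ⟨loop K, a, z, c, v, hB, hc, by simp [hxz], hg⟩
      · left
        refine ⟨x, ⟨hx, hf⟩, v, ⟨hvr, fun hg => hbad ?_⟩, rfl⟩
        have := good_left (x ++ [c]) hg
        simpa using this
  · refine ⟨star (loop K), thin_small hy (hlt _ hst hB), subset_rfl, ?_⟩
    rintro j w ⟨hwK, hbad⟩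
    rcases first_split (loop K) w with hl | ⟨x, c, v, rfl, hx, hc⟩
    · exact Or.inl hl
    · right; right
      refine ⟨c, by simpa using hc, Or.inl ⟨x, hx, v, ⟨hv x c v hx hwK, fun hg => hbad ?_⟩, rfl⟩⟩
      have := good_left (x ++ [c]) hg
      simpa using this

lemma one_le_pw (n j : ℕ) : (1 : ℝ≥0∞) ≤ (n+1) ^ j := one_le_pow₀ (by simp)

theorem upper_bound (hy : y ≤ 1) (hy0 : 0 < y) {L : Set (List σ)} {Big : Finset σ → Prop}
    {U : Finset σ → List σ}
    (hle : ∀ A, star A ⊆ L → sA O y A ≤ 1) (hlt : ∀ A, star A ⊆ L → ¬ Big A → sA O y A < 1)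
    (hU : ∀ A, Big A → U A ≠ []) (hUA : ∀ A, Big A → Over A (U A))
    (K : Set (List σ)) (hK : O.DC K) (hKL : K ⊆ L) :
    ∃ C : ℕ → ℝ≥0∞, ∀ j, C j ≠ ⊤ ∧
      (∀ n : ℕ, mu O y (upto O (bad Big U K (j+1)) n) ≤ C j * (n+1) ^ j) ∧
      (∀ n : ℕ, mu O y (lvl O (bad Big U K (j+2)) n) ≤ C (j+1) * (n+1) ^ j) := by
  refine dc_induction (O := O) (P := fun K => K ⊆ L → ∃ C : ℕ → ℝ≥0∞, ∀ j, C j ≠ ⊤ ∧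
      (∀ n : ℕ, mu O y (upto O (bad Big U K (j+1)) n) ≤ C j * (n+1) ^ j) ∧
      (∀ n : ℕ, mu O y (lvl O (bad Big U K (j+2)) n) ≤ C (j+1) * (n+1) ^ j)) ?_ K hK hKL
  intro K hK ih hKL
  rcases Set.eq_empty_or_nonempty K with rfl | hne
  · refine ⟨fun _ => 0, fun j => ⟨by simp, ?_, ?_⟩⟩
    · intro n
      have : upto O (bad Big U ∅ (j+1)) n = ∅ := by ext; simp [upto, bad]
      rw [this]; simp [mu]
    · intro n
      have : lvl O (bad Big U ∅ (j+2)) n = ∅ := by ext; simp [lvl, bad]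
      rw [this]; simp [mu]
  obtain ⟨hs, Th, hTh, hThs, hdec⟩ := bad_decomp hy hy0 hle hlt hU hUA hK hKL hne
  have ih' : ∀ c, ∃ C : ℕ → ℝ≥0∞, (c ∉ loop K → ∀ j, C j ≠ ⊤ ∧
      (∀ n : ℕ, mu O y (upto O (bad Big U (res K [c]) (j+1)) n) ≤ C j * (n+1) ^ j) ∧
      (∀ n : ℕ, mu O y (lvl O (bad Big U (res K [c]) (j+2)) n) ≤ C (j+1) * (n+1) ^ j)) := by
    intro c
    by_cases hc : c ∈ loop K
    · exact ⟨0, fun h => absurd hc h⟩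
    · obtain ⟨C, hC⟩ := ih c hc ((res_subset hK _).trans hKL)
      exact ⟨C, fun _ => hC⟩
  choose C hC using ih'
  refine ⟨fun j => mu O y Th + 1 + ∑ c ∈ (loop K)ᶜ, (mu O y Th * C c j + C c (j-1)), ?_⟩
  intro j
  refine ⟨?_, ?_, ?_⟩
  · refine ENNReal.add_ne_top.2 ⟨ENNReal.add_ne_top.2 ⟨hTh, by simp⟩, ?_⟩
    refine ENNReal.sum_ne_top.2 ?_
    intro c hc
    rw [Finset.mem_compl] at hc
    exact ENNReal.add_ne_top.2 ⟨ENNReal.mul_ne_top hTh (hC c hc j).1, (hC c hc (j-1)).1⟩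
  · intro n
    have hThn : mu O y (upto O Th n) ≤ mu O y Th := mu_mono (fun w hw => hw.1)
    have key := mu_cover_fin (O := O) (y := y) (S := upto O (bad Big U K (j+1)) n)
      (T := upto O Th n ∪ {w | 1 ≤ j ∧ w ∈ upto O (star (loop K)) n}) (F := (loop K)ᶜ)
      (R := fun c => upto O {w | ∃ x ∈ Th, ∃ v ∈ bad Big U (res K [c]) (j+1), w = x ++ c :: v} n ∪
        upto O {w | 1 ≤ j ∧ ∃ x ∈ star (loop K), ∃ v ∈ bad Big U (res K [c]) j, w = x ++ c :: v} n)
      (by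
        rintro w ⟨hw, hn⟩
        rcases hdec j w hw with h | h | ⟨c, hc, h | h⟩
        · exact Or.inl (Or.inl ⟨h, hn⟩)
        · exact Or.inl (Or.inr ⟨h.1, h.2, hn⟩)
        · exact Or.inr ⟨c, hc, Or.inl ⟨h, hn⟩⟩
        · exact Or.inr ⟨c, hc, Or.inr ⟨h, hn⟩⟩)
    refine key.trans ?_
    rw [add_mul, Finset.sum_mul]
    refine add_le_add ?_ ?_
    · refine (mu_union_le _ _).trans ?_
      rw [add_mul, one_mul]
      refine add_le_add ?_ ?_
      · calc _ ≤ mu O y Th * 1 := by rw [mul_one]; exact hThn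
          _ ≤ _ := by gcongr; exact one_le_pw n j
      · rcases Nat.eq_zero_or_pos j with rfl | hj
        · simp [mu]
        · refine (mu_mono (T := upto O (star (loop K)) n) (fun w hw => hw.2)).trans ?_
          refine (upto_star hs n).trans ?_
          exact le_self_pow₀ (by simp) (by omega)
    · apply Finset.sum_le_sum
      intro c hc
      rw [Finset.mem_compl] at hc
      refine (mu_union_le _ _).trans ?_
      rw [add_mul]
      refine add_le_add ?_ ?_
      · refine (conv_upto hy (c := c) (X := Th) (Y := bad Big U (res K [c]) (j+1))
          (fun w hw => hw) n).trans ?_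
        rw [mul_assoc]
        exact mul_le_mul' hThn ((hC c hc j).2.1 n)
      · cases j with
        | zero =>
          refine le_trans (le_of_eq ?_) (zero_le)
          simp [mu, upto]
        | succ j =>
          refine (conv_upto hy (c := c) (X := star (loop K)) (Y := bad Big U (res K [c]) (j+1))
            (fun w hw => hw.2) n).trans ?_
          refine (mul_le_mul' (upto_star hs n) ((hC c hc j).2.1 n)).trans (le_of_eq ?_)
          simp only [Nat.add_sub_cancel]
          ring
  · intro n
    have key := mu_cover_fin (O := O) (y := y) (S := lvl O (bad Big U K (j+2)) n)
      (T := Th ∪ lvl O (star (loop K)) n) (F := (loop K)ᶜ)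
      (R := fun c => lvl O {w | ∃ x ∈ Th, ∃ v ∈ bad Big U (res K [c]) (j+2), w = x ++ c :: v} n ∪
        lvl O {w | ∃ x ∈ star (loop K), ∃ v ∈ bad Big U (res K [c]) (j+1), w = x ++ c :: v} n)
      (by
        rintro w ⟨hw, hn⟩
        rcases hdec (j+1) w hw with h | h | ⟨c, hc, h | h⟩
        · exact Or.inl (Or.inl h)
        · exact Or.inl (Or.inr ⟨h.2, hn⟩)
        · exact Or.inr ⟨c, hc, Or.inl ⟨h, hn⟩⟩
        · exact Or.inr ⟨c, hc, Or.inr ⟨h.2, hn⟩⟩)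
    refine key.trans ?_
    rw [add_mul, Finset.sum_mul]
    refine add_le_add ?_ ?_
    · refine (mu_union_le _ _).trans ?_
      calc _ ≤ (mu O y Th + 1) * 1 := by
            rw [mul_one]; exact add_le_add le_rfl (star_lvl_le hs n)
        _ ≤ _ := by gcongr; exact one_le_pw n j
    · apply Finset.sum_le_sum
      intro c hc
      rw [Finset.mem_compl] at hc
      refine (mu_union_le _ _).trans ?_
      rw [add_mul]
      refine add_le_add ?_ ?_
      · refine (conv_lvl hy (c := c) (X := Th) (Y := bad Big U (res K [c]) (j+2))
          (fun w hw => hw) n (C := C c (j+1) * (n+1)^j) ?_).trans ?_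
        · intro k hk
          refine ((hC c hc j).2.2 k).trans ?_
          gcongr
        rw [mul_assoc]
        exact mul_le_mul' (mu_mono (fun w hw => hw.1)) le_rfl
      · refine (conv_lvl' hy (c := c) (X := star (loop K)) (Y := bad Big U (res K [c]) (j+1))
            (fun w hw => hw) n (C := 1) (fun k _ => star_lvl_le hs k)).trans ?_
        rw [mul_one]
        exact (hC c hc j).2.1 n

/-- the lower bound -/
theorem lower_bound (hy : y ≤ 1) (hy0 : 0 < y) {L : Set (List σ)} (hL : O.DC L) {M N : ℕ}
    (hM : ∀ a, O.sz a ≤ M) (hP : Pump O L N) {Big : Finset σ → Prop}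
    (hBig : ∀ A, Big A → sA O y A = 1) (hone : ∀ A, Big A → O.one ∈ A) (q : ℕ) :
    ∀ w, Good Big (fun A => pw A.toList N) (q+1) w → ∃ S : Set (List σ),
      (∀ t, t ++ w ∈ L → ∀ w' ∈ S, t ++ w' ∈ L) ∧
      ∃ k : ℝ≥0∞, k ≠ 0 ∧ ∃ n0, ∀ n ≥ n0, k * (n+1) ^ q ≤ mu O y (lvl O S n) := by
  have hpump : ∀ A : Finset σ, ∀ t s x, Over A x → t ++ pw A.toList N ++ s ∈ L →
      t ++ pw A.toList N ++ x ++ s ∈ L := by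
    intro A t s x hx h
    have h1 := hP A t (pw A.toList N) (fun x hx => by simpa using mem_pw hx) (O.refl _)
    have := mem_of_loop (K := res L (t ++ pw A.toList N)) (w := x) (fun a ha => h1 (hx a ha))
      (v := s) h
    simpa [res] using this
  have hyp : ∀ d : ℕ, y ^ d ≠ 0 := fun d => (ENNReal.pow_pos hy0 d).ne'
  induction q with
  | zero =>
    rintro w ⟨A, u, v, hA, rfl⟩
    refine ⟨(fun x => u ++ pw A.toList N ++ x ++ v) '' star A, ?_, ?_⟩
    · rintro t ht _ ⟨x, hx, rfl⟩
      have := hpump A (t ++ u) v x hx (by simpa using ht)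
      simpa using this
    · let d := O.wt (u ++ pw A.toList N ++ v)
      refine ⟨y ^ d * y ^ M, mul_ne_zero (hyp _) (hyp _), d, ?_⟩
      intro n hn
      have : (fun x => u ++ pw A.toList N ++ x ++ v) '' lvl O (star A) (n - d) ⊆
          lvl O ((fun x => u ++ pw A.toList N ++ x ++ v) '' star A) n := by
        rintro _ ⟨x, ⟨hx, hn'⟩, rfl⟩
        refine ⟨⟨x, hx, rfl⟩, ?_⟩
        simp only [d, wt_append] at *
        omega
      refine le_trans ?_ (mu_mono this)
      rw [mu_image (d := d) _ (fun w => by simp only [d, wt_append]; omega)]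
      · rw [pow_zero, mul_one]
        exact mul_le_mul' le_rfl (star_lvl_ge hy hM (hBig A hA) (hone A hA) _)
      · intro a b hab
        exact List.append_cancel_left (List.append_cancel_right hab)
  | succ q ih =>
    rintro w ⟨A, u, u', c, v, hA, hc, rfl, hg⟩
    obtain ⟨w0, c', v1, he, hw0, hc', hg1⟩ : ∃ w0 c' v1, u' ++ c :: v = w0 ++ c' :: v1 ∧
        Over A w0 ∧ c' ∉ A ∧ Good Big (fun A => pw A.toList N) (q+1) v1 := by
      rcases first_split A (u' ++ [c]) with hl | ⟨w0, c', v1, he, h1, h2⟩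
      · exact absurd (hl c (by simp)) hc
      · refine ⟨w0, c', v1 ++ v, ?_, h1, h2, good_left _ hg⟩
        have := congrArg (fun l => l ++ v) he
        simpa using this
    obtain ⟨S1, hS1, k, hk, n0, hn0⟩ := ih v1 hg1
    let p := u ++ pw A.toList N
    let d := O.wt p + O.sz c'
    let t : List σ → Set (List σ) := fun v' => {w | ∃ x ∈ star A, w = p ++ x ++ c' :: v'}
    refine ⟨{w | ∃ v' ∈ S1, w ∈ t v'}, ?_, ?_⟩
    · rintro s hs _ ⟨v', hv', x, hx, rfl⟩
      have h1 : (s ++ u) ++ pw A.toList N ++ ([c'] ++ v1) ∈ L := by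
        apply hL _ _ _ hs
        have : s ++ (u ++ pw A.toList N ++ u' ++ c :: v) =
            (s ++ u) ++ pw A.toList N ++ (w0 ++ ([c'] ++ v1)) := by simp [he]
        rw [this]
        exact O.append (O.refl _) (O.le_of_sublist (List.sublist_append_right _ _))
      have h2 := hpump A _ _ x hx h1
      have h3 := hS1 ((s ++ u) ++ pw A.toList N ++ x ++ [c']) (by simpa using h2) v' hv'
      simpa [p] using h3
    · have hbig : ∀ n ≥ d, mu O y (upto O S1 (n - d)) * (y ^ d * y ^ M) ≤
          mu O y (lvl O {w | ∃ v' ∈ S1, w ∈ t v'} n) := by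
        intro n hn
        apply mu_cover_ge (t := fun v' => (fun x => p ++ x ++ c' :: v') ''
          lvl O (star A) (n - d - O.wt v'))
        · rintro v' _ v'' _ hne
          refine Set.disjoint_left.2 ?_
          rintro w ⟨x, hx, rfl⟩ ⟨x', hx', he'⟩
          apply hne
          simp only [List.append_assoc] at he'
          have he' := List.append_cancel_left he'
          rcases List.append_eq_append_iff.1 he' with ⟨z, h1, h2⟩ | ⟨z, h1, h2⟩
          · cases z with
            | nil => simp at h2; exact h2.symm
            | cons a z =>
              simp at h2
              exact absurd (hx.1 a (by simp [h1])) (by rw [← h2.1]; exact hc')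
          · cases z with
            | nil => simp at h2; exact h2
            | cons a z =>
              simp at h2
              exact absurd (hx'.1 a (by simp [h1])) (by rw [← h2.1]; exact hc')
        · intro w hw
          simp only [Set.mem_iUnion] at hw
          obtain ⟨v', ⟨hv', hle⟩, x, ⟨hx, hwx⟩, rfl⟩ := hw
          refine ⟨⟨v', hv', x, hx, rfl⟩, ?_⟩
          simp only [wt_append, wt_cons]
          simp only [d] at *
          omega
        · rintro v' ⟨hv', hle⟩
          rw [mu_image (d := O.wt v' + d) _ (fun w => by simp [d]; omega)]
          · rw [pow_add y (O.wt v') d, mul_assoc (y ^ O.wt v')]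
            exact mul_le_mul' le_rfl (mul_le_mul' le_rfl
              (star_lvl_ge hy hM (hBig A hA) (hone A hA) _))
          · intro a b hab
            simp only [List.append_assoc] at hab
            exact List.append_cancel_right (List.append_cancel_left hab)
      refine ⟨(k * (4⁻¹) ^ (q+1)) * (y ^ d * y ^ M), ?_, 4 * (n0 + d + 1), ?_⟩
      · refine mul_ne_zero (mul_ne_zero hk (pow_ne_zero _ (by simp))) (mul_ne_zero (hyp _) (hyp _))
      intro n hn
      refine le_trans ?_ (hbig n (by omega))
      rw [mul_right_comm]
      gcongr ?_ * _
      rw [mu_upto_eq]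
      let m := n / 2
      have hsub : Finset.Ico m (n - d + 1) ⊆ Finset.range (n - d + 1) := by
        intro i hi; simp at hi ⊢; omega
      refine le_trans ?_ (Finset.sum_le_sum_of_subset hsub)
      have h4 : (4⁻¹ : ℝ≥0∞) * (n+1) ≤ m + 1 := by
        rw [mul_comm, ← ENNReal.div_eq_inv_mul.trans (mul_comm _ _)]
        apply ENNReal.div_le_of_le_mul
        have : n + 1 ≤ (m+1) * 4 := by omega
        exact_mod_cast this
      have h5 : (4⁻¹ : ℝ≥0∞) * (n+1) ≤ ((n - d + 1 - m : ℕ) : ℝ≥0∞) := by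
        rw [mul_comm, ← ENNReal.div_eq_inv_mul.trans (mul_comm _ _)]
        apply ENNReal.div_le_of_le_mul
        have : n + 1 ≤ (n - d + 1 - m) * 4 := by omega
        exact_mod_cast this
      calc k * (4⁻¹) ^ (q+1) * ((n:ℝ≥0∞)+1) ^ (q+1)
          = (4⁻¹ * (n+1)) * (k * (4⁻¹ * (n+1)) ^ q) := by rw [mul_pow]; ring
        _ ≤ ((n - d + 1 - m : ℕ) : ℝ≥0∞) * (k * (m+1) ^ q) := by gcongr
        _ = ∑ i ∈ Finset.Ico m (n - d + 1), k * ((m : ℝ≥0∞)+1) ^ q := by simp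
        _ ≤ _ := by
          apply Finset.sum_le_sum
          intro i hi
          simp at hi
          refine le_trans ?_ (hn0 i (by omega))
          gcongr
          exact_mod_cast hi.1

end WordOrder
end WC

set_option linter.unusedSectionVars false

namespace WC
namespace WordOrder
open Classical Filter
open scoped ENNReal
variable {σ : Type} [Fintype σ] {O : WordOrder σ} {y : ℝ≥0∞}

/-- number of pairs `(one, non-one)` in this order -/
noncomputable def ms (O : WordOrder σ) : List σ → ℕ
  | [] => 0
  | a :: w => (if a = O.one then w.countP (fun x => decide (x ≠ O.one)) else 0) + ms O w

lemma ms_append (u v : List σ) : ms O (u ++ v) = ms O u + ms O v +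
    u.countP (fun x => decide (x = O.one)) * v.countP (fun x => decide (x ≠ O.one)) := by
  induction u with
  | nil => simp [ms]
  | cons a u ih =>
    simp only [List.cons_append, ms, ih, List.countP_append, List.countP_cons]
    by_cases ha : a = O.one
    · simp [ha]; ring
    · simp [ha]
      try ring

lemma ms_lt {x w v : List σ} {c : σ} (hc : c ∈ w) (hc1 : c ≠ O.one) :
    ms O (x ++ (w ++ [O.one]) ++ v) < ms O (x ++ ([O.one] ++ w) ++ v) := by
  have h0 : 0 < w.countP (fun x => decide (x ≠ O.one)) := by
    rw [List.countP_pos_iff]; exact ⟨c, hc, by simpa using hc1⟩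
  simp only [ms_append, List.countP_append]
  simp [ms]
  simp at h0
  obtain ⟨a, ha, ha1⟩ := h0
  have h0 : 0 < w.countP (fun x => !decide (x = O.one)) := by
    rw [List.countP_pos_iff]; exact ⟨a, ha, by simpa using ha1⟩
  nlinarith

lemma mem_of_wilf {L : Set (List σ)} {w w' : List σ} (hw : w ∈ L) (hwt : O.wt w' = O.wt w)
    (h : WilfW O L w w') : w' ∈ L := by
  have h1 : (Tset O L w (O.wt w)).Nonempty := ⟨w, hw, rfl, O.refl w⟩
  have h2 := (Set.ncard_pos (finite_Tset _ _ _)).2 h1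
  rw [h] at h2
  obtain ⟨t, ht, ht1, ht2⟩ := (Set.ncard_pos (finite_Tset _ _ _)).1 h2
  have := O.eq_of_wt ht2 (by have := hwt.trans ht1.symm; simpa [wt] using this)
  rwa [this]

lemma reduce {L : Set (List σ)} {G : List σ → Prop}
    (hstep : ∀ w ∈ L, G w → ∃ w', O.wt w' = O.wt w ∧ WilfW O L w w' ∧ ms O w' < ms O w) :
    ∀ n, ∀ w ∈ L, ms O w ≤ n → ∃ w', (w' ∈ L ∧ ¬ G w') ∧ O.wt w' = O.wt w ∧ WilfW O L w w' := by
  intro n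
  induction n with
  | zero =>
    intro w hw hn
    by_cases hG : G w
    · obtain ⟨w', -, -, h⟩ := hstep w hw hG
      omega
    · exact ⟨w, ⟨hw, hG⟩, rfl, fun n => rfl⟩
  | succ n ih =>
    intro w hw hn
    by_cases hG : G w
    · obtain ⟨w', h1, h2, h⟩ := hstep w hw hG
      obtain ⟨w'', g1, g2, g3⟩ := ih w' (mem_of_wilf hw h1 h2) (by omega)
      exact ⟨w'', g1, g2.trans h1, fun n => (h2 n).trans (g3 n)⟩
    · exact ⟨w, ⟨hw, hG⟩, rfl, fun n => rfl⟩

lemma good_first {Big : Finset σ → Prop} {U Z : Finset σ → List σ}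
    (hUZ : ∀ A, Big A → ∃ x y, U A = x ++ Z A ++ y) {j : ℕ} {w : List σ}
    (h : Good Big U (j+1) w) :
    ∃ A u v, Big A ∧ w = u ++ U A ++ v ∧ ∀ s, Good Big Z (j+1) (s ++ Z A ++ v) := by
  match j with
  | 0 =>
    obtain ⟨A, u, v, h1, rfl⟩ := h
    exact ⟨A, u, v, h1, rfl, fun s => ⟨A, s, v, h1, rfl⟩⟩
  | j+1 =>
    obtain ⟨A, u, u', c, v, h1, h2, rfl, h3⟩ := h
    exact ⟨A, u, u' ++ c :: v, h1, by simp, fun s => ⟨A, s, u', c, v, h1, h2, by simp,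
      good_factor hUZ h3⟩⟩

lemma expo_step {L : Set (List σ)} (hL : O.DC L) {M N : ℕ} (hM : ∀ a, O.sz a ≤ M) (hN : 0 < N)
    (hP : Pump O L N) {Big : Finset σ → Prop} {j : ℕ} (bm : Finset σ → σ)
    (hb : ∀ A, Big A → bm A ∈ A ∧ bm A ≠ O.one ∧ ∀ a ∈ A, O.sz a ≤ O.sz (bm A))
    (hj : ∀ w ∈ L, ¬ Good Big (fun A => pw A.toList N) (j+2) w)
    {U : Finset σ → List σ}
    (hU : ∀ A, U A = pw A.toList (2*N+2*M) ++ [bm A, O.one, bm A, bm A] ++ pw A.toList (2*N+2*M)) :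
    ∀ w ∈ L, Good Big U (j+1) w → ∃ w', O.wt w' = O.wt w ∧ WilfW O L w w' ∧ ms O w' < ms O w := by
  intro w hw hG
  have hUZ : ∀ A, Big A → ∃ x y, U A = x ++ pw A.toList N ++ y := by
    intro A _
    refine ⟨[], pw A.toList (N+2*M) ++ [bm A, O.one, bm A, bm A] ++ pw A.toList (2*N+2*M), ?_⟩
    rw [hU, show 2*N+2*M = N + (N+2*M) by ring, pw_add A.toList N (N+2*M)]; simp
  obtain ⟨A, u, v, hA, rfl, hg⟩ := good_first (Z := fun A => pw A.toList N) hUZ hG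
  obtain ⟨h1, h2, h3⟩ := hb A hA
  have hT : Tight L N u A v := by
    intro c hc hmem
    refine hj _ hmem ?_
    have := good_step (u := u) hA hc (u' := [c]) (by simp) (hg [])
    simpa using this
  have key := expo_wilf hL hM hN hP hT h1 h3
  suffices hs : ∃ w', WilfW O L _ w' ∧ ms O w' < ms O _ ∧ O.wt w' = O.wt _ from by
    obtain ⟨w', a1, a2, a3⟩ := hs
    exact ⟨w', a3, a1, a2⟩
  refine ⟨((u ++ pw A.toList (2*N+2*M) ++ [bm A]) ++ [bm A, O.one] ++
        ([bm A] ++ pw A.toList (2*N+2*M) ++ v)), ?_, ?_, ?_⟩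
  · have e : u ++ U A ++ v = ((u ++ pw A.toList (2*N+2*M) ++ [bm A]) ++ [O.one, bm A] ++
        ([bm A] ++ pw A.toList (2*N+2*M) ++ v)) := by rw [hU]; simp
    rw [e]; exact key
  · have := ms_lt (O := O) (x := u ++ pw A.toList (2*N+2*M) ++ [bm A]) (w := [bm A])
      (v := ([bm A] ++ pw A.toList (2*N+2*M) ++ v)) (c := bm A) (by simp) h2
    rw [hU]
    simpa using this
  · rw [hU]; simp; ring

lemma poly_step {L : Set (List σ)} (hL : O.DC L) {M N : ℕ} (hM : ∀ a, O.sz a ≤ M) (hN : 0 < N)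
    (hP : Pump O L N) {Big : Finset σ → Prop} {j : ℕ}
    (hb : ∀ A, Big A → A = {O.one})
    (hj : ∀ w ∈ L, ¬ Good Big (fun A => pw A.toList N) (j+3) w)
    {U : Finset σ → List σ}
    (hU : ∀ A, U A = E O ((2*N+2*M) + (2*M+2*N+1+1))) :
    ∀ w ∈ L, Good Big U (j+2) w → ∃ w', O.wt w' = O.wt w ∧ WilfW O L w w' ∧ ms O w' < ms O w := by
  intro w hw hG
  have hUZ : ∀ A, Big A → ∃ x y, U A = x ++ pw A.toList N ++ y := by
    intro A hA
    refine ⟨[], E O (N+2*M + (2*M+2*N+1+1)), ?_⟩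
    rw [hU, hb A hA, pw_one, List.nil_append, ← E_add]; congr 1; ring
  obtain ⟨A, u, u', c, v, hA, hc, rfl, hv⟩ := hG
  obtain ⟨A', u2, v2, hA', rfl, hg⟩ := good_first (Z := fun A => pw A.toList N) hUZ hv
  obtain rfl := hb A hA
  obtain rfl := hb A' hA'
  have hc1 : c ≠ O.one := by simpa using hc
  simp only [pw_one] at hg
  have hp1 : pw [O.one] N = E O N := by simpa using pw_one (O := O) N
  have hg2 : ∀ s (c' : σ), c' ∉ ({O.one} : Finset σ) → ∀ s', c' ∈ s' →
      Good Big (fun A => pw A.toList N) (j+2) (s ++ E O N ++ s' ++ E O N ++ v2) := by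
    intro s c' hc' s' hs'
    have := good_step (Z := fun A => pw A.toList N) (u := s) hA hc' hs' (hg [])
    simpa [hp1] using this
  have hT1 : Tight L N u {O.one} ((u' ++ c :: u2) ++ (E O N ++ v2)) := by
    intro c' hc' hmem
    refine hj _ hmem ?_
    have := good_step (Z := fun A => pw A.toList N) (u := u) hA hc' (u' := [c']) (by simp)
      (hg2 [] c hc (u' ++ c :: u2) (by simp))
    simpa [hp1] using this
  have hT2 : Tight L N (u ++ E O N ++ (u' ++ c :: u2)) {O.one} v2 := by
    intro c' hc' hmem
    refine hj _ hmem ?_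
    have := good_step (Z := fun A => pw A.toList N) (u := u) hA hc (u' := u' ++ c :: u2) (by simp)
      (hg2 [] c' hc' [c'] (by simp))
    simpa [hp1] using this
  have key := poly_wilf hL hM hN hP hT1 hT2 (k := 2*M+2*N+1) (k' := 2*M+2*N+1+1) (by omega)
    (by omega)
  have hE1 : ∀ k, E O (k+1) = E O k ++ [O.one] := fun k => by rw [E_add]; rfl
  have hE2 : ∀ k, E O (k+1) = [O.one] ++ E O k := fun k => by rw [add_comm, E_add]; rfl
  have hcomm : ∀ i k, E O i ++ E O k = E O k ++ E O i := fun i k => by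
    rw [← E_add, ← E_add, add_comm]
  suffices hs : ∃ w', WilfW O L _ w' ∧ ms O w' < ms O _ ∧ O.wt w' = O.wt _ from by
    obtain ⟨w', a1, a2, a3⟩ := hs
    exact ⟨w', a3, a1, a2⟩
  refine ⟨((u ++ E O (2*N+2*M)) ++ (E O (2*M+2*N+1) ++ (u' ++ c :: u2) ++
    E O (2*M+2*N+1+1+1)) ++ (E O (2*N+2*M) ++ v2)), ?_, ?_, ?_⟩
  · have e : u ++ U {O.one} ++ u' ++ c :: (u2 ++ U {O.one} ++ v2) =
      ((u ++ E O (2*N+2*M)) ++ (E O (2*M+2*N+1+1) ++ (u' ++ c :: u2) ++ E O (2*M+2*N+1+1)) ++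
        (E O (2*N+2*M) ++ v2)) := by
      rw [hU]
      conv_lhs => rw [E_add]
      simp only [List.append_assoc, List.cons_append]
      congr 5
      rw [← List.append_assoc (E O _), hcomm]
      simp
    rw [e]; exact key
  · have := ms_lt (O := O) (x := u ++ E O (2*N+2*M) ++ E O (2*M+2*N+1)) (w := u' ++ c :: u2)
      (v := E O (2*M+2*N+1+1) ++ (E O (2*N+2*M) ++ v2)) (c := c) (by simp) hc1
    rw [hU]
    have e1 : (u ++ E O (2*N+2*M)) ++ (E O (2*M+2*N+1) ++ (u' ++ c :: u2) ++
        E O (2*M+2*N+1+1+1)) ++ (E O (2*N+2*M) ++ v2) =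
        u ++ E O (2*N+2*M) ++ E O (2*M+2*N+1) ++ (u' ++ c :: u2 ++ [O.one]) ++
        (E O (2*M+2*N+1+1) ++ (E O (2*N+2*M) ++ v2)) := by
      rw [hE2 (2*M+2*N+1+1)]; simp
    have e2 : u ++ E O (2*N+2*M + (2*M+2*N+1+1)) ++ u' ++
        c :: (u2 ++ E O (2*N+2*M + (2*M+2*N+1+1)) ++ v2) =
        u ++ E O (2*N+2*M) ++ E O (2*M+2*N+1) ++ ([O.one] ++ (u' ++ c :: u2)) ++
        (E O (2*M+2*N+1+1) ++ (E O (2*N+2*M) ++ v2)) := by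
      conv_lhs => 
        enter [2, 2, 1, 2]
        rw [E_add, hcomm]
      rw [E_add, hE1 (2*M+2*N+1)]; simp
    rw [e1, e2]; exact this
  · rw [hU]; simp only [E_add]; simp; ring

/-- the critical value -/
lemma exists_y (O : WordOrder σ) {L : Set (List σ)} (h1 : star {O.one} ⊆ L) :
    ∃ y : ℝ≥0∞, 0 < y ∧ y ≤ 1 ∧ (∀ A : Finset σ, star A ⊆ L → sA O y A ≤ 1) ∧
      ∃ A : Finset σ, star A ⊆ L ∧ sA O y A = 1 := by
  let F : Finset (Finset σ) := Finset.univ.filter (fun A => star A ⊆ L)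
  have hF : F.Nonempty := ⟨{O.one}, by simp [F, h1]⟩
  let h : ℝ → ℝ := fun t => F.sup' hF (fun A => ∑ a ∈ A, t ^ O.sz a)
  have hc : Continuous h := by
    apply Continuous.finset_sup'_apply
    intro A _
    fun_prop
  have h0 : h 0 ≤ 1 := by
    apply Finset.sup'_le
    intro A _
    rw [Finset.sum_eq_zero]
    · norm_num
    · intro a _; simp [(O.sz_pos a).ne']
  have h1' : 1 ≤ h 1 := by
    refine le_trans ?_ (Finset.le_sup' (fun A => ∑ a ∈ A, (1:ℝ) ^ O.sz a)
      (b := {O.one}) (by simp [F, h1]))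
    simp
  obtain ⟨t, ht, hht⟩ := intermediate_value_Icc (zero_le_one' ℝ) hc.continuousOn ⟨h0, h1'⟩
  have hsA : ∀ A : Finset σ, sA O (ENNReal.ofReal t) A = ENNReal.ofReal (∑ a ∈ A, t ^ O.sz a) := by
    intro A
    unfold sA
    rw [ENNReal.ofReal_sum_of_nonneg (fun a _ => pow_nonneg ht.1 _)]
    exact Finset.sum_congr rfl (fun a _ => (ENNReal.ofReal_pow ht.1 _).symm)
  obtain ⟨A, hA, hAe⟩ := Finset.exists_mem_eq_sup' hF (fun A => ∑ a ∈ A, t ^ O.sz a)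
  have hA1 : sA O (ENNReal.ofReal t) A = 1 := by
    rw [hsA, ← hAe]
    have : F.sup' hF (fun A => ∑ a ∈ A, t ^ O.sz a) = 1 := hht
    rw [this]; simp
  refine ⟨ENNReal.ofReal t, ?_, ?_, ?_, A, by simpa [F] using hA, hA1⟩
  · rw [pos_iff_ne_zero]
    intro h0
    rw [h0] at hA1
    unfold sA at hA1
    rw [Finset.sum_eq_zero] at hA1
    · simp at hA1
    · intro a _; simp [(O.sz_pos a).ne']
  · simpa using ht.2
  · intro B hB
    rw [hsA]
    have : ∑ a ∈ B, t ^ O.sz a ≤ h t :=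
      Finset.le_sup' (fun A => ∑ a ∈ A, t ^ O.sz a) (by simpa [F] using hB)
    rw [hht] at this
    simpa using this

lemma count_o {L I : Set (List σ)} (hy0 : 0 < y) (hy : y ≤ 1)
    (h : ∀ ε : ℝ≥0∞, ε ≠ 0 → ε ≠ ⊤ → ∀ᶠ n in atTop, mu O y (lvl O I n) ≤ ε * mu O y (lvl O L n)) :
    (fun n => ((lvl O I n).ncard : ℝ)) =o[atTop] fun n => ((lvl O L n).ncard : ℝ) := by
  rw [Asymptotics.isLittleO_iff]
  intro ε hε
  filter_upwards [h (ENNReal.ofReal ε) (by simpa using hε) (by simp)] with n hn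
  rw [mu_lvl, mu_lvl, ← mul_assoc] at hn
  have hyn : y ^ n ≠ 0 := pow_ne_zero _ hy0.ne'
  have hyt : y ^ n ≠ ⊤ := ENNReal.pow_ne_top (ne_top_of_le_ne_top (by simp) hy)
  rw [ENNReal.mul_le_mul_iff_left hyn hyt] at hn
  rw [← ENNReal.ofReal_natCast, ← ENNReal.ofReal_natCast, ← ENNReal.ofReal_mul hε.le,
    ENNReal.ofReal_le_ofReal_iff (by positivity)] at hn
  simpa using hn

theorem words_main (O : WordOrder σ) (L : Set (List σ)) (hL : O.DC L) (h1 : star {O.one} ⊆ L)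
    (hunb : ¬ ∃ B : ℕ, ∀ n, (lvl O L n).ncard ≤ B) :
    ∃ I ⊆ L, (∀ w ∈ L, ∃ w' ∈ I, O.wt w' = O.wt w ∧ WilfW O L w w') ∧
      (fun n => ((lvl O I n).ncard : ℝ)) =o[atTop] fun n => ((lvl O L n).ncard : ℝ) := by
  obtain ⟨M, hM⟩ : ∃ M, ∀ a, O.sz a ≤ M :=
    ⟨∑ a, O.sz a, fun a => Finset.single_le_sum (f := O.sz) (fun _ _ => Nat.zero_le _)
      (Finset.mem_univ a)⟩
  obtain ⟨N, hN, hP⟩ := pump hM L hL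
  obtain ⟨y, hy0, hy, hle, A0, hA0, hA0s⟩ := exists_y O h1
  let Big : Finset σ → Prop := fun A => star A ⊆ L ∧ sA O y A = 1
  have hlt : ∀ A, star A ⊆ L → ¬ Big A → sA O y A < 1 := fun A hA hB =>
    lt_of_le_of_ne (hle A hA) (fun h => hB ⟨hA, h⟩)
  have hmax : ∀ A B, Big A → A ⊆ B → (∀ w, Over B w → w ∈ L) → B ⊆ A := by
    intro A B hA hAB hB c hc
    by_contra hcA
    have h2 : sA O y (insert c A) ≤ sA O y B :=
      Finset.sum_le_sum_of_subset (Finset.insert_subset hc hAB)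
    unfold sA at h2
    rw [Finset.sum_insert hcA] at h2
    have h3 := hle B hB
    have h4 : ∑ a ∈ A, y ^ O.sz a = 1 := hA.2
    rw [h4] at h2
    have h5 := h2.trans h3
    have h6 : 1 < y ^ O.sz c + 1 := by
      rw [add_comm]
      exact ENNReal.lt_add_right (by simp) (pow_ne_zero _ hy0.ne')
    exact absurd h5 (not_le.2 h6)
  have hne : ∀ A, Big A → A.Nonempty := by
    intro A hA
    rw [Finset.nonempty_iff_ne_empty]
    rintro rfl
    have := hA.2
    simp [sA] at this
  have hone : ∀ A, Big A → O.one ∈ A := by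
    intro A hA
    refine hmax A (insert O.one A) hA (Finset.subset_insert _ _) ?_ (Finset.mem_insert_self _ _)
    obtain ⟨a, ha⟩ := hne A hA
    intro w hw
    have : ∀ w, Over (insert O.one A) w → ∃ w', Over A w' ∧ O.le w w' := by
      intro w
      induction w with
      | nil => intro _; exact ⟨[], by simp [Over], O.refl _⟩
      | cons x w ih =>
        intro hw
        obtain ⟨w', h1, h2⟩ := ih (fun z hz => hw z (by simp [hz]))
        have hx := hw x (by simp)
        by_cases hxA : x ∈ A
        · exact ⟨[x] ++ w', over_append.2 ⟨by simpa [Over] using hxA, h1⟩,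
            O.append (u := [x]) (O.refl _) h2⟩
        · have : x = O.one := by simpa [hxA] using hx
          subst this
          exact ⟨[a] ++ w', over_append.2 ⟨by simpa [Over] using ha, h1⟩,
            O.append (u := [O.one]) (O.one_le a) h2⟩
    obtain ⟨w', h1, h2⟩ := this w hw
    exact hL _ _ h2 (hA.1 h1)
  let Z : Finset σ → List σ := fun A => pw A.toList N
  have hZover : ∀ A, Over A (Z A) := fun A x hx => by simpa using mem_pw hx
  have hZmem : ∀ A, Big A → ∀ x ∈ A, x ∈ Z A := by
    intro A _ x hx
    obtain ⟨k, rfl⟩ := Nat.exists_eq_succ_of_ne_zero hN.ne'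
    simp only [Z, pw_succ, Nat.succ_eq_add_one, List.mem_append]
    left; simpa using hx
  have hZne : ∀ A, Big A → Z A ≠ [] := fun A hA h => by
    have := hZmem A hA _ (hone A hA)
    simp [h] at this
  have hex := good_bounded hZmem hmax L hL subset_rfl
  obtain ⟨p, hp⟩ : ∃ p, Nat.find hex = p + 2 := by
    have hs := Nat.find_spec hex
    have hin : Z A0 ∈ L := hA0 (hZover A0)
    have h2 : Good Big Z 1 (Z A0) := ⟨A0, [], [], ⟨hA0, hA0s⟩, by simp⟩
    have : 2 ≤ Nat.find hex := by
      by_contra hcon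
      exact hs _ hin (good_mono (by omega) h2)
    exact ⟨Nat.find hex - 2, by omega⟩
  have hj : ∀ w ∈ L, ¬ Good Big Z (p+2) w := by
    have := Nat.find_spec hex
    rwa [hp] at this
  obtain ⟨w0, hw0, hg0⟩ : ∃ w ∈ L, Good Big Z (p+1) w := by
    have := Nat.find_min hex (m := p+1) (by omega)
    push Not at this
    exact this
  obtain ⟨S, hS, k, hk, n0, hlow⟩ := lower_bound hy hy0 hL hM hP (fun A hA => hA.2) hone p w0 hg0
  have hSL : S ⊆ L := fun w' hw' => by simpa using hS [] (by simpa using hw0) w' hw'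
  have hlow' : ∀ n ≥ n0, k * (n+1) ^ p ≤ mu O y (lvl O L n) := fun n hn =>
    (hlow n hn).trans (mu_mono (fun w hw => ⟨hSL hw.1, hw.2⟩))
  -- the counting part, for every `U`
  have hcount : ∀ U : Finset σ → List σ, (∀ A, Big A → U A ≠ []) → (∀ A, Big A → Over A (U A)) →
      (fun n => ((lvl O (bad Big U L (p+1)) n).ncard : ℝ)) =o[atTop]
        fun n => ((lvl O L n).ncard : ℝ) := by
    intro U hU hUA
    apply count_o hy0 hy
    intro ε hε hεt
    obtain ⟨C, hC⟩ := upper_bound hy hy0 hle hlt hU hUA L hL subset_rfl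
    cases p with
    | zero =>
      have hs : ∑' n, mu O y (lvl O (bad Big U L 1) n) ≠ ⊤ := by
        refine ne_top_of_le_ne_top (hC 0).1 ?_
        rw [ENNReal.tsum_eq_iSup_nat' (N := fun n => n+1) (tendsto_add_atTop_nat 1)]
        refine iSup_le (fun n => ?_)
        rw [← mu_upto_eq]
        simpa using (hC 0).2.1 n
      have ht := ENNReal.tendsto_atTop_zero_of_tsum_ne_top hs
      have hev := ht.eventually (gt_mem_nhds (pos_iff_ne_zero.2 (mul_ne_zero hε hk)))
      filter_upwards [hev, eventually_ge_atTop n0] with n hn hn0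
      refine hn.le.trans (mul_le_mul' le_rfl ?_)
      simpa using hlow' n hn0
    | succ p =>
      have hCt := (hC (p+1)).1
      have hk2 : ∃ m : ℕ, C (p+1) ≤ ε * k * m := by
        have hd : C (p+1) / (ε * k) ≠ ⊤ := ENNReal.div_ne_top hCt (mul_ne_zero hε hk)
        obtain ⟨m, hm⟩ := ENNReal.exists_nat_gt hd
        refine ⟨m + 1, ?_⟩
        by_cases hek : ε * k = ⊤
        · rw [hek, ENNReal.top_mul (by exact_mod_cast Nat.succ_ne_zero m)]; exact le_top
        · rw [ENNReal.div_lt_iff (Or.inl (mul_ne_zero hε hk)) (Or.inl hek)] at hm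
          refine hm.le.trans ?_
          rw [mul_comm]
          gcongr
          exact le_self_add
      obtain ⟨m, hm⟩ := hk2
      filter_upwards [eventually_ge_atTop n0, eventually_ge_atTop m] with n hn0 hnm
      calc mu O y (lvl O (bad Big U L (p+2)) n) ≤ C (p+1) * (n+1) ^ p := (hC p).2.2 n
        _ ≤ (ε * k * (n+1)) * (n+1) ^ p := by
          gcongr
          refine hm.trans ?_
          gcongr
          exact_mod_cast hnm.trans (Nat.le_succ n)
        _ = ε * (k * (n+1) ^ (p+1)) := by ring
        _ ≤ _ := by gcongr; exact hlow' n hn0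
  by_cases hpoly : Big {O.one}
  · have hb : ∀ A, Big A → A = {O.one} := fun A hA =>
      (hmax _ A hpoly (by simpa using hone A hA) hA.1).antisymm (by simpa using hone A hA)
    have hy1 : y = 1 := by
      have := hpoly.2
      simpa [sA, O.sz_one] using this
    obtain ⟨p', rfl⟩ : ∃ p', p = p' + 1 := by
      refine Nat.exists_eq_succ_of_ne_zero ?_
      rintro rfl
      apply hunb
      obtain ⟨C, hC⟩ := upper_bound hy hy0 hle hlt hZne (fun A _ => hZover A) L hL subset_rfl
      obtain ⟨m, hm⟩ := ENNReal.exists_nat_gt (hC 1).1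
      refine ⟨m, fun n => ?_⟩
      have h2 := (hC 0).2.2 n
      have h3 : bad Big Z L (0+2) = L := by
        ext w; exact ⟨fun h => h.1, fun h => ⟨h, hj w h⟩⟩
      rw [h3, mu_lvl, hy1] at h2
      have h4 := h2.trans (by simpa using hm.le)
      simpa using h4
    have hst := poly_step hL hM hN hP hb hj (U := fun _ => E O ((2*N+2*M) + (2*M+2*N+1+1)))
      (fun _ => rfl)
    refine ⟨bad Big (fun _ => E O ((2*N+2*M) + (2*M+2*N+1+1))) L (p'+2), fun w hw => hw.1, ?_, hcount _ ?_ ?_⟩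
    · intro w hw
      exact reduce hst _ w hw le_rfl
    · intro A hA; simp [E]
    · intro A hA x hx
      simp only [E, List.mem_replicate] at hx
      rw [hx.2]; exact hone A hA
  · have hbex : ∀ A, ∃ b, Big A → b ∈ A ∧ b ≠ O.one ∧ ∀ a ∈ A, O.sz a ≤ O.sz b := by
      intro A
      by_cases hA : Big A
      · obtain ⟨b, hb1, hb2⟩ := Finset.exists_max_image A O.sz (hne A hA)
        refine ⟨b, fun _ => ⟨hb1, ?_, hb2⟩⟩
        rintro rfl
        apply hpoly
        have : A = {O.one} := by
          refine Finset.eq_singleton_iff_unique_mem.2 ⟨hb1, fun a ha => ?_⟩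
          have h3 := hb2 a ha
          rw [O.sz_one] at h3
          have h4 := O.sz_pos a
          have := O.eq_of_wt (O.one_le a) (by simp [O.sz_one]; omega)
          simpa using this.symm
        rwa [← this]
      · exact ⟨O.one, fun h => absurd h hA⟩
    choose bm hbm using hbex
    have hst := expo_step hL hM hN hP bm hbm hj
      (U := fun A => pw A.toList (2*N+2*M) ++ [bm A, O.one, bm A, bm A] ++ pw A.toList (2*N+2*M))
      (fun _ => rfl)
    refine ⟨bad Big (fun A => pw A.toList (2*N+2*M) ++ [bm A, O.one, bm A, bm A] ++
      pw A.toList (2*N+2*M)) L (p+1), fun w hw => hw.1, ?_, hcount _ ?_ ?_⟩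
    · intro w hw
      exact reduce hst _ w hw le_rfl
    · intro A hA; simp
    · intro A hA
      have hpo : Over A (pw A.toList (2*N+2*M)) := fun x hx => by simpa using mem_pw hx
      refine over_append.2 ⟨over_append.2 ⟨hpo, ?_⟩, hpo⟩
      have := (hbm A hA).1
      have := hone A hA
      intro x hx
      simp at hx
      rcases hx with rfl | rfl | rfl <;> assumption

end WordOrder
end WC

namespace WC
open Classical

/-- one-line notation as a function on `ℕ`, extended by the identity -/
def vl (π : PPerm) (i : ℕ) : ℕ := if h : i < π.1 then (π.2 ⟨i, h⟩ : ℕ) else i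

lemma vl_of_lt {π : PPerm} {i : ℕ} (h : i < π.1) : vl π i = π.2 ⟨i, h⟩ := by simp [vl, h]

lemma vl_fin (π : PPerm) (i : Fin π.1) : vl π i = π.2 i := by simp [vl]

lemma vl_lt {π : PPerm} {i : ℕ} (h : i < π.1) : vl π i < π.1 := by
  rw [vl_of_lt h]; exact (π.2 ⟨i, h⟩).2

lemma vl_inj {π : PPerm} {i j : ℕ} (hi : i < π.1) (hj : j < π.1) (h : vl π i = vl π j) : i = j := by
  rw [vl_of_lt hi, vl_of_lt hj] at h
  have := π.2.injective (Fin.ext h)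
  simpa using this

lemma ppext {π τ : PPerm} (h : π.1 = τ.1) (h' : ∀ i, i < π.1 → vl π i = vl τ i) : π = τ := by
  obtain ⟨n, p⟩ := π
  obtain ⟨m, q⟩ := τ
  obtain rfl : n = m := h
  congr 1
  ext i
  have := h' i i.2
  rw [vl_fin ⟨n, p⟩ i, vl_fin ⟨n, q⟩ i] at this
  exact this

lemma exists_of_fun (n : ℕ) (f : ℕ → ℕ) (h1 : ∀ i < n, f i < n)
    (h2 : ∀ i < n, ∀ j < n, f i = f j → i = j) :
    ∃ π : PPerm, π.1 = n ∧ ∀ i < n, vl π i = f i := by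
  let g : Fin n → Fin n := fun i => ⟨f i, h1 i i.2⟩
  have hg : Function.Injective g := by
    intro i j hij
    exact Fin.ext (h2 i i.2 j j.2 (by simpa [g] using hij))
  refine ⟨⟨n, Equiv.ofBijective g (Finite.injective_iff_bijective.1 hg)⟩, rfl, ?_⟩
  intro i hi
  rw [vl_of_lt (π := ⟨n, _⟩) hi]
  simp [g]

@[simp] lemma psum_size (a b : PPerm) : (psum a b).1 = a.1 + b.1 := rfl

lemma vl_psum (a b : PPerm) (i : ℕ) :
    vl (psum a b) i = if i < a.1 then vl a i else a.1 + vl b (i - a.1) := by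
  by_cases h : i < a.1
  · rw [if_pos h, vl_of_lt (π := psum a b) (by simp; omega), vl_of_lt h]
    have : (⟨i, by simp; omega⟩ : Fin (psum a b).1) = Fin.castAdd b.1 ⟨i, h⟩ := rfl
    rw [this]
    change ((finSumFinEquiv (Sum.map a.2 b.2 (finSumFinEquiv.symm (Fin.castAdd b.1 ⟨i, h⟩))) : Fin _) : ℕ) = _
    rw [finSumFinEquiv_symm_apply_castAdd]
    simp
  · rw [if_neg h]
    by_cases h2 : i < a.1 + b.1
    · have h3 : i - a.1 < b.1 := by omega
      rw [vl_of_lt (π := psum a b) h2, vl_of_lt h3]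
      have : (⟨i, h2⟩ : Fin (a.1 + b.1)) = Fin.natAdd a.1 ⟨i - a.1, h3⟩ := by
        ext; simp; omega
      change ((finSumFinEquiv (Sum.map a.2 b.2 (finSumFinEquiv.symm (⟨i, h2⟩ : Fin (a.1 + b.1)))) : Fin _) : ℕ) = _
      rw [this, finSumFinEquiv_symm_apply_natAdd]
      simp
    · have h3 : ¬ i - a.1 < b.1 := by omega
      have h4 : ¬ i < (psum a b).1 := h2
      simp only [vl, h3, h4, dif_neg, not_false_iff]
      omega

lemma ple_iff {π τ : PPerm} : PatternLE π τ ↔ ∃ g : ℕ → ℕ,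
    (∀ i j, i < j → j < π.1 → g i < g j) ∧ (∀ i < π.1, g i < τ.1) ∧
    ∀ i < π.1, ∀ j < π.1, (vl π i < vl π j ↔ vl τ (g i) < vl τ (g j)) := by
  constructor
  · rintro ⟨g, hg, h⟩
    refine ⟨fun i => if h : i < π.1 then g ⟨i, h⟩ else 0, ?_, ?_, ?_⟩
    · intro i j hij hj
      have hi : i < π.1 := hij.trans hj
      simp only [hi, hj, dif_pos]
      exact hg (show (⟨i, hi⟩ : Fin π.1) < ⟨j, hj⟩ from hij)
    · intro i hi
      simp [hi]
    · intro i hi j hj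
      simp only [hi, hj, dif_pos, vl_fin]
      rw [vl_of_lt hi, vl_of_lt hj]
      exact h ⟨i, hi⟩ ⟨j, hj⟩
  · rintro ⟨g, h1, h2, h3⟩
    refine ⟨fun i => ⟨g i, h2 i i.2⟩, ?_, ?_⟩
    · intro i j hij
      exact h1 i j hij j.2
    · intro i j
      have := h3 i i.2 j j.2
      rw [vl_fin, vl_fin, vl_of_lt (h2 i i.2), vl_of_lt (h2 j j.2)] at this
      exact this

lemma ple_refl (π : PPerm) : PatternLE π π := ⟨id, strictMono_id, fun _ _ => Iff.rfl⟩

lemma ple_trans {π τ ρ : PPerm} : PatternLE π τ → PatternLE τ ρ → PatternLE π ρ := by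
  rintro ⟨g, hg, h⟩ ⟨g', hg', h'⟩
  exact ⟨g' ∘ g, hg'.comp hg, fun i j => (h i j).trans (h' _ _)⟩

lemma ple_size {π τ : PPerm} : PatternLE π τ → π.1 ≤ τ.1 := by
  rintro ⟨g, hg, -⟩
  simpa using Fintype.card_le_of_injective g hg.injective

lemma ple_eq {π τ : PPerm} (h : PatternLE π τ) (hs : π.1 = τ.1) : π = τ := by
  obtain ⟨n, p⟩ := π
  obtain ⟨m, q⟩ := τ
  obtain rfl : n = m := hs
  obtain ⟨g, hg, h⟩ := h
  simp only at g hg h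
  have mono_id : ∀ f : Fin n → Fin n, StrictMono f → f = id := by
    intro f hf
    refine (hf.range_inj strictMono_id).1 ?_
    rw [(Finite.surjective_of_injective hf.injective).range_eq, Set.range_id]
  have hgid := mono_id g hg
  subst hgid
  have : StrictMono (fun i => q (p.symm i)) := by
    intro i j hij
    have := (h (p.symm i) (p.symm j)).1 (by simpa using hij)
    exact this
  have h2 := mono_id _ this
  congr 1
  ext i
  have := congrFun h2 (p i)
  simp at this
  rw [this]

lemma ple_psum {a a' b b' : PPerm} (h1 : PatternLE a a') (h2 : PatternLE b b') :
    PatternLE (psum a b) (psum a' b') := by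
  rw [ple_iff] at *
  obtain ⟨g, g1, g2, g3⟩ := h1
  obtain ⟨f, f1, f2, f3⟩ := h2
  refine ⟨fun i => if i < a.1 then g i else a'.1 + f (i - a.1), ?_, ?_, ?_⟩
  · intro i j hij hj
    simp only [psum_size] at hj
    by_cases hi' : i < a.1 <;> by_cases hj' : j < a.1 <;> simp only [hi', hj', if_true, if_false]
    · exact g1 i j hij hj'
    · have := g2 i hi'; omega
    · omega
    · have := f1 (i - a.1) (j - a.1) (by omega) (by omega); omega
  · intro i hi
    simp only [psum_size] at hi ⊢
    split_ifs with h
    · have := g2 i h; omega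
    · have := f2 (i - a.1) (by omega); omega
  · intro i hi j hj
    simp only [psum_size] at hi hj
    simp only [vl_psum]
    by_cases hi' : i < a.1 <;> by_cases hj' : j < a.1 <;> simp only [hi', hj', if_true, if_false]
    · simp only [g2 i hi', g2 j hj', if_true]
      exact g3 i hi' j hj'
    · have e1 := g2 i hi'
      have e2 := vl_lt hi'
      have e3 := vl_lt e1
      simp only [e1, if_true]
      rw [if_neg (by omega)]
      constructor <;> intro <;> omega
    · have e1 := g2 j hj'
      have e2 := vl_lt hj'
      have e3 := vl_lt e1
      simp only [e1, if_true]
      rw [if_neg (by omega)]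
      constructor <;> intro <;> omega
    · rw [if_neg (by omega), if_neg (by omega)]
      have := f3 (i - a.1) (by omega) (j - a.1) (by omega)
      simp only [Nat.add_sub_cancel_left, Nat.add_lt_add_iff_left]
      exact this

lemma cut {π : PPerm} {k : ℕ} (hk : k ≤ π.1) (h : ∀ i < k, vl π i < k) :
    ∃ π1 π2 : PPerm, π = psum π1 π2 ∧ π1.1 = k := by
  have hge : ∀ i, k ≤ i → i < π.1 → k ≤ vl π i := by
    intro i hi hi'
    by_contra hlt
    have hsurj : ∃ j < k, vl π j = vl π i := by
      have himg : (Finset.range k).image (vl π) = Finset.range k := by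
        apply Finset.eq_of_subset_of_card_le
        · intro x hx
          simp only [Finset.mem_image, Finset.mem_range] at hx ⊢
          obtain ⟨j, hj, rfl⟩ := hx
          exact h j hj
        · rw [Finset.card_image_of_injOn]
          intro a ha b hb hab
          simp only [Finset.coe_range, Set.mem_Iio] at ha hb
          exact vl_inj (by omega) (by omega) hab
      have : vl π i ∈ (Finset.range k).image (vl π) := by rw [himg]; simpa using hlt
      simpa using this
    obtain ⟨j, hj, hj'⟩ := hsurj
    have := vl_inj (by omega) hi' hj'
    omega
  obtain ⟨π1, s1, v1⟩ := exists_of_fun k (vl π) h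
    (fun i hi j hj hij => vl_inj (by omega) (by omega) hij)
  obtain ⟨π2, s2, v2⟩ := exists_of_fun (π.1 - k) (fun i => vl π (k + i) - k)
    (fun i hi => by have := vl_lt (π := π) (i := k + i) (by omega); omega)
    (fun i hi j hj hij => by
      have h1 := hge (k+i) (by omega) (by omega)
      have h2 := hge (k+j) (by omega) (by omega)
      have := vl_inj (π := π) (i := k+i) (j := k+j) (by omega) (by omega)
        (by omega)
      omega)
  refine ⟨π1, π2, ppext (by simp; omega) ?_, s1⟩
  intro i hi
  rw [vl_psum, s1]
  split_ifs with hik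
  · exact (v1 i hik).symm
  · rw [v2 _ (by omega)]
    have := hge i (by omega) hi
    rw [show k + (i - k) = i by omega]
    omega

lemma ple_split {π a b : PPerm} (h : PatternLE π (psum a b)) :
    ∃ π1 π2, π = psum π1 π2 ∧ PatternLE π1 a ∧ PatternLE π2 b := by
  rw [ple_iff] at h
  obtain ⟨g, g1, g2, g3⟩ := h
  have hk : ∀ n ≤ π.1, ∃ k ≤ n, ∀ i < n, (i < k ↔ g i < a.1) := by
    intro n
    induction n with
    | zero => intro _; exact ⟨0, le_rfl, by simp⟩
    | succ n ih =>
      intro hn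
      obtain ⟨k, hk, h⟩ := ih (by omega)
      by_cases hgn : g n < a.1
      · refine ⟨n+1, le_rfl, fun i hi => ⟨fun _ => ?_, fun _ => hi⟩⟩
        rcases Nat.lt_succ_iff_lt_or_eq.1 hi with hi | rfl
        · have := g1 i n hi (by omega); omega
        · exact hgn
      · refine ⟨k, by omega, fun i hi => ?_⟩
        rcases Nat.lt_succ_iff_lt_or_eq.1 hi with hi | rfl
        · exact h i hi
        · constructor
          · intro; omega
          · intro h; exact absurd h hgn
  obtain ⟨k, hkn, hk⟩ := hk π.1 le_rfl
  have hlt : ∀ i < k, ∀ j, k ≤ j → j < π.1 → vl π i < vl π j := by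
    intro i hi j hj hj'
    rw [g3 i (by omega) j hj', vl_psum, vl_psum]
    have h1 := (hk i (by omega)).1 hi
    have h2 : ¬ g j < a.1 := fun h => by have := (hk j hj').2 h; omega
    rw [if_pos h1, if_neg h2]
    have := vl_lt h1
    omega
  have hcut : ∀ i < k, vl π i < k := by
    intro i hi
    have hsub : (Finset.Ico k π.1).image (vl π) ⊆ Finset.Ioo (vl π i) π.1 := by
      intro x hx
      simp only [Finset.mem_image, Finset.mem_Ico, Finset.mem_Ioo] at hx ⊢
      obtain ⟨j, hj, rfl⟩ := hx
      exact ⟨hlt i hi j hj.1 hj.2, vl_lt hj.2⟩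
    have hcard := Finset.card_le_card hsub
    rw [Finset.card_image_of_injOn] at hcard
    · simp at hcard
      have := vl_lt (π := π) (i := i) (by omega)
      omega
    · intro x hx y hy hxy
      simp only [Finset.coe_Ico, Set.mem_Ico] at hx hy
      exact vl_inj hx.2 hy.2 hxy
  obtain ⟨π1, π2, rfl, hs⟩ := cut hkn hcut
  subst hs
  simp only [psum_size] at *
  have hge : ∀ i < π2.1, a.1 ≤ g (π1.1 + i) := by
    intro i hi
    have := hk (π1.1 + i) (by omega)
    omega
  refine ⟨π1, π2, rfl, ple_iff.2 ⟨g, ?_, ?_, ?_⟩, ple_iff.2 ⟨fun i => g (π1.1 + i) - a.1, ?_, ?_, ?_⟩⟩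
  · intro i j hij hj; exact g1 i j hij (by omega)
  · intro i hi; exact (hk i (by omega)).1 hi
  · intro i hi j hj
    have := g3 i (by omega) j (by omega)
    rw [vl_psum, vl_psum, vl_psum, vl_psum, if_pos hi, if_pos hj, if_pos ((hk i (by omega)).1 hi),
      if_pos ((hk j (by omega)).1 hj)] at this
    exact this
  · intro i j hij hj
    have := g1 (π1.1 + i) (π1.1 + j) (by omega) (by omega)
    have := hge i (by omega)
    have := hge j (by omega)
    dsimp only
    omega
  · intro i hi
    have := g2 (π1.1 + i) (by omega)
    have := hge i hi
    dsimp only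
    omega
  · intro i hi j hj
    have := g3 (π1.1 + i) (by omega) (π1.1 + j) (by omega)
    have e1 := hge i (by omega)
    have e2 := hge j (by omega)
    rw [vl_psum, vl_psum, vl_psum, vl_psum, if_neg (by omega), if_neg (by omega),
      if_neg (by omega), if_neg (by omega)] at this
    simpa using this

/-- the empty permutation -/
def emp : PPerm := ⟨0, 1⟩

/-- sum of a list of permutations -/
def ev : List PPerm → PPerm
  | [] => emp
  | a :: w => psum a (ev w)

lemma emp_size : emp.1 = 0 := rfl

lemma eq_emp {π : PPerm} (h : π.1 = 0) : π = emp := ppext (by rw [h, emp_size]) (by omega)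

lemma psum_emp (a : PPerm) : psum a emp = a := by
  refine ppext (by simp [emp_size]) ?_
  intro i hi
  simp [emp_size] at hi
  simp [vl_psum, hi]

lemma emp_psum (a : PPerm) : psum emp a = a := by
  refine ppext (by simp [emp_size]) ?_
  intro i hi
  simp [vl_psum, emp_size]

lemma psum_assoc (a b c : PPerm) : psum (psum a b) c = psum a (psum b c) := by
  refine ppext (by simp [add_assoc]) ?_
  intro i hi
  simp only [vl_psum, psum_size]
  by_cases h1 : i < a.1
  · simp [h1, show i < a.1 + b.1 by omega]
  · by_cases h2 : i < a.1 + b.1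
    · simp [h1, h2, show i - a.1 < b.1 by omega]
    · simp only [h1, h2, show ¬ i - a.1 < b.1 by omega, if_false]
      rw [Nat.sub_sub]; omega

lemma ev_append (u v : List PPerm) : ev (u ++ v) = psum (ev u) (ev v) := by
  induction u with
  | nil => simp [ev, emp_psum]
  | cons a u ih => simp [ev, ih, psum_assoc]

lemma ev_size (w : List PPerm) : (ev w).1 = (w.map Sigma.fst).sum := by
  induction w with
  | nil => simp [ev, emp_size]
  | cons a w ih => simp [ev, ih]

lemma exists_ev : ∀ (n : ℕ) (π : PPerm), π.1 ≤ n → ∃ w, (∀ a ∈ w, SumIndec a) ∧ π = ev w := by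
  intro n
  induction n with
  | zero => intro π h; exact ⟨[], by simp, eq_emp (by omega)⟩
  | succ n ih =>
    intro π h
    by_cases h0 : π.1 = 0
    · exact ⟨[], by simp, eq_emp h0⟩
    by_cases hi : SumIndec π
    · exact ⟨[π], by simpa using hi, by simp [ev, psum_emp]⟩
    · have : ∃ α β : PPerm, 0 < α.1 ∧ 0 < β.1 ∧ π = psum α β := by
        by_contra hcon
        exact hi ⟨by omega, hcon⟩
      obtain ⟨α, β, hα, hβ, rfl⟩ := this
      simp only [psum_size] at h
      obtain ⟨u, hu, hu'⟩ := ih α (by omega)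
      obtain ⟨v, hv, hv'⟩ := ih β (by omega)
      refine ⟨u ++ v, ?_, by rw [ev_append, ← hu', ← hv']⟩
      intro a ha
      rcases List.mem_append.1 ha with ha | ha
      exacts [hu a ha, hv a ha]

lemma indec_size_le {a b x y : PPerm} (ha : SumIndec a) (hb : SumIndec b)
    (h : psum a x = psum b y) : b.1 ≤ a.1 := by
  by_contra hlt
  push Not at hlt
  have hc : ∀ i < a.1, vl b i < a.1 := by
    intro i hi
    have h1 : vl (psum a x) i = vl a i := by rw [vl_psum, if_pos hi]
    have h2 : vl (psum b y) i = vl b i := by rw [vl_psum, if_pos (by omega)]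
    rw [← h2, ← h, h1]
    exact vl_lt hi
  obtain ⟨b1, b2, hb', hs⟩ := cut hlt.le hc
  refine hb.2 ⟨b1, b2, by have := ha.1; omega, ?_, hb'⟩
  have : b.1 = b1.1 + b2.1 := by rw [hb']; rfl
  omega

lemma psum_cancel {a b x y : PPerm} (hs : a.1 = b.1) (h : psum a x = psum b y) :
    a = b ∧ x = y := by
  have hsz : a.1 + x.1 = b.1 + y.1 := congrArg Sigma.fst h
  constructor
  · refine ppext hs fun i hi => ?_
    have := congrArg (fun π => vl π i) h
    simp only [vl_psum] at this
    rwa [if_pos hi, if_pos (by omega)] at this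
  · refine ppext (by omega) fun i hi => ?_
    have := congrArg (fun π => vl π (a.1 + i)) h
    simp only [vl_psum] at this
    rw [if_neg (by omega), if_neg (by omega), hs] at this
    simpa using this

lemma ev_inj : ∀ {u v : List PPerm}, (∀ a ∈ u, SumIndec a) → (∀ a ∈ v, SumIndec a) →
    ev u = ev v → u = v := by
  intro u
  induction u with
  | nil =>
    intro v _ hv h
    cases v with
    | nil => rfl
    | cons b v =>
      have := congrArg Sigma.fst h
      have h2 := (hv b (by simp)).1
      simp [ev, emp_size] at this
      omega
  | cons a u ih =>
    intro v hu hv h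
    cases v with
    | nil =>
      have := congrArg Sigma.fst h
      have h2 := (hu a (by simp)).1
      simp [ev, emp_size] at this
      omega
    | cons b v =>
      have ha := hu a (by simp)
      have hb := hv b (by simp)
      have hs : a.1 = b.1 := le_antisymm (indec_size_le hb ha h.symm) (indec_size_le ha hb h)
      obtain ⟨h1, h2⟩ := psum_cancel hs h
      rw [h1, ih (fun x hx => hu x (by simp [hx])) (fun x hx => hv x (by simp [hx])) h2]

lemma ev_letter_le {a : PPerm} {w : List PPerm} (h : a ∈ w) : PatternLE a (ev w) := by
  have hempl : ∀ π, PatternLE emp π := fun π =>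
    ⟨fun i => i.elim0, fun i => i.elim0, fun i => i.elim0⟩
  induction w with
  | nil => simp at h
  | cons b w ih =>
    rcases List.mem_cons.1 h with rfl | h
    · have := ple_psum (ple_refl a) (hempl (ev w))
      rwa [psum_emp] at this
    · have := ple_psum (hempl b) (ih h)
      rwa [emp_psum] at this

lemma emp_le (π : PPerm) : PatternLE emp π :=
  ⟨fun i => i.elim0, fun i => i.elim0, fun i => i.elim0⟩

/-- the permutation of size one -/
def pt : PPerm := ⟨1, 1⟩

lemma pt_le {π : PPerm} (h : 0 < π.1) : PatternLE pt π := by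
  refine ⟨fun _ => ⟨0, h⟩, ?_, ?_⟩
  · intro i j hij
    have : i = j := Subsingleton.elim (α := Fin 1) _ _
    exact absurd hij (by rw [this]; simp)
  · intro i j
    have : i = j := Subsingleton.elim (α := Fin 1) _ _
    subst this; simp

lemma pt_indec : SumIndec pt := by
  refine ⟨Nat.one_pos, ?_⟩
  rintro ⟨α, β, hα, hβ, h⟩
  have : 1 = α.1 + β.1 := congrArg Sigma.fst h
  omega

lemma finite_size (n : ℕ) : {π : PPerm | π.1 = n}.Finite := by
  have : {π : PPerm | π.1 = n} ⊆ Set.range (fun p : Equiv.Perm (Fin n) => (⟨n, p⟩ : PPerm)) := by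
    rintro ⟨m, p⟩ h
    obtain rfl : m = n := h
    exact ⟨p, rfl⟩
  exact (Set.finite_range _).subset this

end WC

namespace WC
open Classical

section transfer
variable {C : Set PPerm}

/-- letters: sum-indecomposables of the class -/
abbrev Lt (C : Set PPerm) : Type := {π : PPerm // π ∈ C ∧ SumIndec π}

/-- evaluation of a word of letters -/
def evw (w : List (Lt C)) : PPerm := ev (w.map Subtype.val)

lemma evw_append (u v : List (Lt C)) : evw (u ++ v) = psum (evw u) (evw v) := by
  simp [evw, ev_append]

lemma evw_indec (w : List (Lt C)) : ∀ a ∈ w.map Subtype.val, SumIndec a := by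
  intro a ha
  obtain ⟨b, -, rfl⟩ := List.mem_map.1 ha
  exact b.2.2

lemma evw_inj : Function.Injective (evw (C := C)) := by
  intro u v h
  exact List.map_injective_iff.2 Subtype.val_injective (ev_inj (evw_indec u) (evw_indec v) h)

lemma evw_size (w : List (Lt C)) : (evw w).1 = (w.map (fun a => a.1.1)).sum := by
  rw [evw, ev_size, List.map_map]; rfl

lemma evw_single (a : Lt C) : evw [a] = a.1 := by simp [evw, ev, psum_emp]

lemma exists_evw (hclass : IsPermClass C) {π : PPerm} (hπ : π ∈ C) :
    ∃ w : List (Lt C), evw w = π := by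
  obtain ⟨w, hw, rfl⟩ := exists_ev π.1 π le_rfl
  have hC : ∀ a ∈ w, a ∈ C ∧ SumIndec a := fun a ha =>
    ⟨hclass _ _ (ev_letter_le ha) hπ, hw a ha⟩
  refine ⟨w.attach.map (fun a => ⟨a.1, hC a.1 a.2⟩), ?_⟩
  simp [evw, Function.comp_def]

lemma evw_split (hclass : IsPermClass C) {w u v : List (Lt C)}
    (h : PatternLE (evw w) (evw (u ++ v))) :
    ∃ w1 w2, w = w1 ++ w2 ∧ PatternLE (evw w1) (evw u) ∧ PatternLE (evw w2) (evw v) := by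
  rw [evw_append] at h
  obtain ⟨p, q, hpq, h1, h2⟩ := ple_split h
  obtain ⟨x, hx, rfl⟩ := exists_ev p.1 p le_rfl
  obtain ⟨y, hy, rfl⟩ := exists_ev q.1 q le_rfl
  rw [← ev_append] at hpq
  have := ev_inj (evw_indec w) (by
    intro a ha
    rcases List.mem_append.1 ha with ha | ha
    exacts [hx a ha, hy a ha]) hpq
  obtain ⟨w1, w2, rfl, rfl, rfl⟩ := List.map_eq_append_iff.1 this
  exact ⟨w1, w2, rfl, h1, h2⟩

/-- the order on words -/
def ordC (hclass : IsPermClass C) (hpt : pt ∈ C) : WordOrder (Lt C) where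
  sz a := a.1.1
  le w v := PatternLE (evw w) (evw v)
  one := ⟨pt, hpt, pt_indec⟩
  sz_pos a := a.2.2.1
  sz_one := rfl
  refl w := ple_refl _
  trans h1 h2 := ple_trans h1 h2
  nil_le w := emp_le _
  append h1 h2 := by rw [evw_append, evw_append]; exact ple_psum h1 h2
  split h := evw_split hclass h
  wt_le h := by rw [← evw_size, ← evw_size]; exact ple_size h
  eq_of_wt h h' := by
    rw [← evw_size, ← evw_size] at h'
    exact evw_inj (ple_eq h h')
  one_le a := by rw [evw_single, evw_single]; exact pt_le a.2.2.1

variable (hclass : IsPermClass C) (hpt : pt ∈ C)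

lemma wt_evw (w : List (Lt C)) : (ordC hclass hpt).wt w = (evw w).1 := by
  rw [evw_size]; rfl

lemma img_lvl (n : ℕ) :
    {τ : PPerm | τ ∈ C ∧ τ.1 = n} =
      evw '' (WordOrder.lvl (ordC hclass hpt) {w | evw w ∈ C} n) := by
  ext τ
  constructor
  · rintro ⟨h1, h2⟩
    obtain ⟨w, rfl⟩ := exists_evw hclass h1
    exact ⟨w, ⟨h1, by rw [wt_evw]; exact h2⟩, rfl⟩
  · rintro ⟨w, ⟨h1, h2⟩, rfl⟩
    rw [wt_evw] at h2
    exact ⟨h1, h2⟩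

lemma cnt_eq (n : ℕ) :
    cnt C n = (WordOrder.lvl (ordC hclass hpt) {w | evw w ∈ C} n).ncard := by
  rw [cnt, img_lvl hclass hpt, Set.ncard_image_of_injective _ evw_inj]

lemma cont_eq (w : List (Lt C)) (n : ℕ) :
    {τ : PPerm | τ ∈ C ∧ τ.1 = n ∧ PatternLE (evw w) τ}.ncard =
      (WordOrder.Tset (ordC hclass hpt) {w | evw w ∈ C} w n).ncard := by
  rw [← Set.ncard_image_of_injective _ evw_inj]
  congr 1
  ext τ
  constructor
  · rintro ⟨h1, h2, h3⟩
    obtain ⟨v, rfl⟩ := exists_evw hclass h1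
    exact ⟨v, ⟨h1, by rw [wt_evw]; exact h2, h3⟩, rfl⟩
  · rintro ⟨v, ⟨h1, h2, h3⟩, rfl⟩
    rw [wt_evw] at h2
    exact ⟨h1, h2, h3⟩

lemma cnt_split (α : PPerm) (n : ℕ) :
    cnt C n = avcnt C α n + {τ : PPerm | τ ∈ C ∧ τ.1 = n ∧ PatternLE α τ}.ncard := by
  rw [cnt, avcnt, ← Set.ncard_union_eq ?_ ((finite_size n).subset fun τ h => h.2.1)
    ((finite_size n).subset fun τ h => h.2.1)]
  · congr 1
    ext τ
    simp only [Set.mem_setOf_eq, Set.mem_union]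
    tauto
  · rw [Set.disjoint_left]
    rintro τ ⟨_, _, h⟩ ⟨_, _, h'⟩
    exact h h'

lemma wilf_transfer {w w' : List (Lt C)}
    (h : WordOrder.WilfW (ordC hclass hpt) {w | evw w ∈ C} w w') :
    WilfEq C (evw w) (evw w') := by
  intro n
  have h1 := cnt_split (C := C) (evw w) n
  have h2 := cnt_split (C := C) (evw w') n
  rw [cont_eq hclass hpt] at h1 h2
  have := h n
  omega

lemma star_sub [Fintype (Lt C)] (hunb : ¬ ∃ M : ℕ, ∀ n : ℕ, cnt C n ≤ M) :
    WordOrder.star {(ordC hclass hpt).one} ⊆ {w | evw w ∈ C} := by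
  intro w0 hw0
  by_contra hcon
  have hrep : ∀ w : List (Lt C),
      (ordC hclass hpt).le (List.replicate w.length (ordC hclass hpt).one) w := by
    intro w
    induction w with
    | nil => exact (ordC hclass hpt).refl _
    | cons a w ih =>
      rw [List.length_cons, List.replicate_succ]
      exact (ordC hclass hpt).append ((ordC hclass hpt).one_le a) ih
  have hw0' : w0 = List.replicate w0.length (ordC hclass hpt).one :=
    List.eq_replicate_of_mem fun b hb => Finset.mem_singleton.1 (hw0 b hb)
  have hlen : ∀ w : List (Lt C), evw w ∈ C → w.length ≤ w0.length := by
    intro w hw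
    by_contra hlt
    push Not at hlt
    apply hcon
    refine hclass _ _ ?_ (hclass _ _ (hrep w) hw)
    obtain ⟨k, hk⟩ := Nat.exists_eq_add_of_lt hlt
    have h1 : w.length = w0.length + (k + 1) := by omega
    rw [h1, List.replicate_add, ← hw0']
    have := (ordC hclass hpt).append ((ordC hclass hpt).refl w0)
      ((ordC hclass hpt).nil_le (List.replicate (k+1) (ordC hclass hpt).one))
    rw [List.append_nil] at this
    exact this
  have hfinL : {w : List (Lt C) | evw w ∈ C}.Finite :=
    (List.finite_length_le (Lt C) w0.length).subset hlen
  apply hunb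
  refine ⟨{w : List (Lt C) | evw w ∈ C}.ncard, fun n => ?_⟩
  rw [cnt_eq hclass hpt]
  exact Set.ncard_le_ncard (fun w hw => hw.1) hfinL

lemma pt_mem (hclass : IsPermClass C) (hunb : ¬ ∃ M : ℕ, ∀ n : ℕ, cnt C n ≤ M) : pt ∈ C := by
  push Not at hunb
  obtain ⟨n, hn⟩ := hunb (cnt C 0)
  have hn0 : n ≠ 0 := by rintro rfl; omega
  have hne : {τ : PPerm | τ ∈ C ∧ τ.1 = n}.Nonempty := by
    apply Set.nonempty_of_ncard_ne_zero
    change cnt C n ≠ 0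
    omega
  obtain ⟨τ, hτ, hs⟩ := hne
  exact hclass _ _ (pt_le (by omega)) hτ

theorem main_transfer (hclass : IsPermClass C)
    (hfin : {π : PPerm | π ∈ C ∧ SumIndec π}.Finite)
    (hunb : ¬ ∃ M : ℕ, ∀ n : ℕ, cnt C n ≤ M) : WilfCollapse C := by
  have hpt := pt_mem hclass hunb
  haveI : Fintype (Lt C) := hfin.fintype
  obtain ⟨I, hIL, hI, ho⟩ := WordOrder.words_main (ordC hclass hpt) {w | evw w ∈ C}
    (fun u v h hv => hclass _ _ h hv) (star_sub hclass hpt hunb)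
    (by
      rintro ⟨B, hB⟩
      exact hunb ⟨B, fun n => by rw [cnt_eq hclass hpt]; exact hB n⟩)
  have hle : ∀ n, wilfcnt C n ≤ (WordOrder.lvl (ordC hclass hpt) I n).ncard := by
    intro n
    have hfinI : (WordOrder.lvl (ordC hclass hpt) I n).Finite :=
      (WordOrder.finite_wt (ordC hclass hpt) n).subset fun w hw => hw.2.le
    rw [wilfcnt]
    refine (Set.ncard_le_ncard (t := (fun w => {β : PPerm | β ∈ C ∧ β.1 = n ∧ WilfEq C (evw w) β}) ''
      (WordOrder.lvl (ordC hclass hpt) I n)) ?_ (hfinI.image _)).trans (Set.ncard_image_le hfinI)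
    rintro S ⟨α, hα, hs, rfl⟩
    obtain ⟨w, rfl⟩ := exists_evw hclass hα
    obtain ⟨w', hw', hwt, hW⟩ := hI w hα
    have hE := wilf_transfer hclass hpt hW
    refine ⟨w', ⟨hw', by rw [hwt, wt_evw, hs]⟩, ?_⟩
    ext β
    simp only [Set.mem_setOf_eq]
    refine and_congr_right fun _ => and_congr_right fun _ => ⟨fun h k => ?_, fun h k => ?_⟩
    · rw [hE k, h k]
    · rw [← hE k, h k]
  have hc : (fun n => (cnt C n : ℝ)) =
      fun n => ((WordOrder.lvl (ordC hclass hpt) {w | evw w ∈ C} n).ncard : ℝ) := by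
    funext n; rw [cnt_eq hclass hpt]
  unfold WilfCollapse
  rw [hc]
  refine Asymptotics.IsBigO.trans_isLittleO (Asymptotics.isBigO_of_le _ fun n => ?_) ho
  simp only [Real.norm_natCast]
  exact_mod_cast hle n

end transfer
end WC

/-- **Theorem `thm-finind`.**  Any permutation class with finitely many
sum-indecomposable permutations and an unbounded growth function exhibits a Wilf
collapse. -/
theorem finitelyManyIndecomposables_wilfCollapse (C : Set PPerm)
    (hclass : IsPermClass C)
    (hfin : {π : PPerm | π ∈ C ∧ SumIndec π}.Finite)
    (hunb : ¬ ∃ M : ℕ, ∀ n : ℕ, cnt C n ≤ M) :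
    WilfCollapse C := by
  exact WC.main_transfer hclass hfin hunb
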